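/- arXiv:2312.14116 — 2 statements merged into one kernel-verified Lean document; each statement's English description precedes it below -/
import Mathlib

section
/- Let K be an algebraically closed field and F = (f_1,…,f_t) in K[x,y] of total degrees at most d ≥ 1, such that the common zero set V(F) ⊆ K² is finite. Then there exists a nonzero polynomial Y_2 in four variables over K, of total degree at most d⁴, such that for every γ = (γ_{1,1}, γ_{1,2}, γ_{2,1}, γ_{2,2}) ∈ K⁴ with Y_2(γ) ≠ 0 and with the 2×2 matrix [γ_{i,j}] invertible, the projection onto the first coordinate, (α,β) ↦ α, is injective on V(f_1^γ,…,f_t^γ). -/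
noncomputable section

open Polynomial

/-- Bivariate polynomials `k[x][y]`: the inner `X` is `x`, the outer `X` is `y`. -/
abbrev Biv (k : Type*) [CommRing k] : Type _ := Polynomial (Polynomial k)

/-- The total degree of a bivariate polynomial `f ∈ k[x][y]`. -/
def totDeg {k : Type*} [CommRing k] (f : Biv k) : ℕ :=
  f.support.sup fun j => j + (f.coeff j).natDegree

/-- The linear change of coordinates
`f^γ(x,y) = f(γ₁₁ x + γ₂₁ y, γ₁₂ x + γ₂₂ y)`, where
`γ = (γ₁₁, γ₁₂, γ₂₁, γ₂₂) = (γ 0, γ 1, γ 2, γ 3)`. -/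
def transform {k : Type*} [CommRing k] (γ : Fin 4 → k) (f : Biv k) : Biv k :=
  Polynomial.eval₂
    (Polynomial.eval₂RingHom
      ((Polynomial.C : Polynomial k →+* Biv k).comp (Polynomial.C : k →+* Polynomial k))
      (Polynomial.C (Polynomial.C (γ 0)) * Polynomial.C Polynomial.X +
        Polynomial.C (Polynomial.C (γ 2)) * Polynomial.X))
    (Polynomial.C (Polynomial.C (γ 1)) * Polynomial.C Polynomial.X +
      Polynomial.C (Polynomial.C (γ 3)) * Polynomial.X)
    f

/-- Evaluation of `f ∈ k[x][y]` at the point `(a, b) ∈ k²` (`a` is the value of `x`,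
`b` the value of `y`). -/
def bEval {k : Type*} [CommRing k] (a b : k) (f : Biv k) : k :=
  Polynomial.eval b (f.map (Polynomial.evalRingHom a))


namespace MvPolynomial.AvoidHyp

abbrev R2 (K : Type*) [CommRing K] := MvPolynomial (Fin 2) K

theorem finrank_P (K : Type*) [Field K] (m : ℕ) :
    2 * Module.finrank K (restrictTotalDegree (Fin 2) K m) = (m + 1) * (m + 2) := by
  have h1 : Module.finrank K (restrictTotalDegree (Fin 2) K m) =
      Nat.card { n : Fin 2 →₀ ℕ | (n.sum fun _ e => e) ≤ m } :=
    Module.finrank_eq_nat_card_basis (basisRestrictSupport K _)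
  let φ : (Σ _ : ℕ, ℕ) → (Fin 2 →₀ ℕ) := fun s => Finsupp.equivFunOnFinite.symm ![s.1, s.2]
  have hφ : Function.Injective φ := by
    rintro ⟨a, b⟩ ⟨c, e⟩ h
    have h0 := DFunLike.congr_fun h 0
    have h1 := DFunLike.congr_fun h 1
    simp [φ] at h0 h1
    simp [h0, h1]
  have h2 : { n : Fin 2 →₀ ℕ | (n.sum fun _ e => e) ≤ m } =
      (((Finset.range (m+1)).sigma (fun i => Finset.range (m+1-i))).map ⟨φ, hφ⟩ :
        Finset (Fin 2 →₀ ℕ)) := by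
    ext n
    simp only [Set.mem_ofPred_eq, Finset.coe_map, Set.mem_image, Finset.mem_coe,
      Finset.mem_sigma, Finset.mem_range, Function.Embedding.coeFn_mk]
    rw [Finsupp.sum_fintype _ _ (fun _ => rfl), Fin.sum_univ_two]
    constructor
    · intro h
      refine ⟨⟨n 0, n 1⟩, ⟨by simp; omega, by simp; omega⟩, ?_⟩
      ext i
      fin_cases i <;> simp [φ]
    · rintro ⟨⟨a, b⟩, ⟨ha, hb⟩, rfl⟩
      simp [φ] at *
      omega
  rw [h1, h2, Nat.card_coe_set_eq, Set.ncard_coe_finset, Finset.card_map, Finset.card_sigma]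
  simp only [Finset.card_range]
  clear h1 h2
  induction m with
  | zero => simp
  | succ m ih =>
    rw [Finset.sum_range_succ']
    simp only [Nat.add_sub_add_right]
    rw [mul_add, ih]
    simp; ring

theorem interp {K : Type*} [Field K] (S : Finset (Fin 2 → K)) (s : Fin 2 → K) (hs : s ∉ S) :
    ∃ p : R2 K, p.totalDegree ≤ S.card ∧ eval s p ≠ 0 ∧ ∀ t ∈ S, eval t p = 0 := by
  classical
  induction S using Finset.induction_on with
  | empty => exact ⟨1, by simp⟩
  | insert a S ha ih =>
    simp only [Finset.mem_insert, not_or] at hs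
    obtain ⟨p, h1, h2, h3⟩ := ih hs.2
    obtain ⟨i, hi⟩ := Function.ne_iff.1 hs.1
    refine ⟨p * (X i - C (a i)), ?_, ?_, ?_⟩
    · rw [Finset.card_insert_of_notMem ha]
      refine (totalDegree_mul _ _).trans (add_le_add h1 ?_)
      refine (totalDegree_sub _ _).trans ?_
      simp
    · simp [h2, sub_ne_zero, hi]
    · intro t ht
      rcases Finset.mem_insert.1 ht with rfl | ht
      · simp
      · simp [h3 t ht]

theorem bezout {K : Type*} [Field K] (g h : R2 K) (hg : g ≠ 0) (hh : h ≠ 0)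
    (hc : IsRelPrime g h) (S : Finset (Fin 2 → K))
    (hSg : ∀ s ∈ S, eval s g = 0) (hSh : ∀ s ∈ S, eval s h = 0) :
    S.card ≤ g.totalDegree * h.totalDegree := by
  classical
  let P := restrictTotalDegree (Fin 2) K
  set e := g.totalDegree with he
  set e' := h.totalDegree with he'
  set n := S.card with hn
  let mg : R2 K →ₗ[K] R2 K := LinearMap.mulLeft K g
  let mh : R2 K →ₗ[K] R2 K := LinearMap.mulLeft K h
  let mgh : R2 K →ₗ[K] R2 K := LinearMap.mulLeft K (g * h)
  have ig : Function.Injective mg := mul_right_injective₀ hg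
  have ih : Function.Injective mh := mul_right_injective₀ hh
  have igh : Function.Injective mgh := mul_right_injective₀ (mul_ne_zero hg hh)
  let ev : R2 K →ₗ[K] (S → K) := LinearMap.pi fun s => (aeval s.1 : R2 K →ₐ[K] K).toLinearMap
  have hev : ∀ p s, ev p s = eval s.1 p := fun p s => by
    simp [ev, aeval_eq_eval]
  set A := (P (n + e')).map mg with hA
  set B := (P (n + e)).map mh with hB
  have fA : Module.finrank K A = Module.finrank K (P (n + e')) :=
    (Submodule.equivMapOfInjective mg ig _).finrank_eq.symm
  have fB : Module.finrank K B = Module.finrank K (P (n + e)) :=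
    (Submodule.equivMapOfInjective mh ih _).finrank_eq.symm
  have fC : Module.finrank K ((P n).map mgh) = Module.finrank K (P n) :=
    (Submodule.equivMapOfInjective mgh igh _).finrank_eq.symm
  have hsup : A ⊔ B ≤ P (n + e + e') ⊓ LinearMap.ker ev := by
    refine sup_le ?_ ?_
    · rintro _ ⟨a, ha, rfl⟩
      have ha' := (mem_restrictTotalDegree _ _ _).1 ha
      refine ⟨(mem_restrictTotalDegree _ _ _).2 ((totalDegree_mul _ _).trans (by omega)), ?_⟩
      refine LinearMap.mem_ker.2 (_root_.funext fun s => ?_)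
      rw [hev]
      simp [mg, hSg s.1 s.2]
    · rintro _ ⟨a, ha, rfl⟩
      have ha' := (mem_restrictTotalDegree _ _ _).1 ha
      refine ⟨(mem_restrictTotalDegree _ _ _).2 ((totalDegree_mul _ _).trans (by omega)), ?_⟩
      refine LinearMap.mem_ker.2 (_root_.funext fun s => ?_)
      rw [hev]
      simp [mh, hSh s.1 s.2]
  have hinf : A ⊓ B ≤ (P n).map mgh := by
    rintro _ ⟨⟨a, ha, rfl⟩, ⟨b, hb, hab⟩⟩
    have ha' := (mem_restrictTotalDegree _ _ _).1 ha
    have hab' : h * b = g * a := hab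
    have hd : h ∣ a := hc.symm.dvd_of_dvd_mul_left ⟨b, hab'.symm⟩
    obtain ⟨c, rfl⟩ := hd
    refine ⟨c, (mem_restrictTotalDegree _ _ _).2 ?_, by simp [mgh, mg, mul_assoc]⟩
    by_cases hc0 : c = 0
    · simp [hc0]
    · rw [totalDegree_mul_of_isDomain hh hc0] at ha'
      omega
  have hsurj : LinearMap.range (ev.domRestrict (P (n + e + e'))) = ⊤ := by
    rw [eq_top_iff, ← (Pi.basisFun K S).span_eq, Submodule.span_le]
    rintro _ ⟨s, rfl⟩
    obtain ⟨p, h1, h2, h3⟩ := interp (S.erase s.1) s.1 (by simp)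
    have hle : (S.erase s.1).card ≤ n := Finset.card_le_card (Finset.erase_subset _ _)
    have hp : (eval s.1 p)⁻¹ • p ∈ P (n + e + e') := 
      Submodule.smul_mem _ _ ((mem_restrictTotalDegree _ _ _).2 (by omega))
    refine ⟨⟨_, hp⟩, ?_⟩
    funext t
    simp only [LinearMap.domRestrict_apply, hev, Pi.basisFun_apply, smul_eval]
    by_cases hts : t = s
    · subst hts; simp [h2]
    · rw [h3 t.1 (by simp [Subtype.val_injective.ne_iff, hts])]
      simp [hts]
  have rn := LinearMap.finrank_range_add_finrank_ker (ev.domRestrict (P (n + e + e')))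
  rw [hsurj, finrank_top, Module.finrank_fintype_fun_eq_card, Fintype.card_coe] at rn
  have hker : Module.finrank K (LinearMap.ker (ev.domRestrict (P (n + e + e')))) =
      Module.finrank K ↥(P (n + e + e') ⊓ LinearMap.ker ev) := by
    rw [← Submodule.finrank_map_subtype_eq, LinearMap.ker_domRestrict, ← Submodule.map_comap_subtype]
  have f1 := Submodule.finrank_sup_add_finrank_inf_eq A B
  have f2 := Submodule.finrank_mono hsup
  have f3 := Submodule.finrank_mono hinf
  have d1 := finrank_P K (n + e + e')
  have d2 := finrank_P K (n + e)
  have d3 := finrank_P K (n + e')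
  have d4 := finrank_P K n
  simp only [P] at *
  nlinarith

theorem prime_inf {K : Type*} [Field K] [IsAlgClosed K] (p : R2 K) (hp : Prime p)
    (hfin : {s : Fin 2 → K | eval s p = 0}.Finite) : False := by
  classical
  have key : ∀ i : Fin 2, ∃ a : K, p ∣ X i - C a := by
    intro i
    have : (∏ s ∈ hfin.toFinset, (X i - C (s i)) : R2 K) ∈ (Ideal.span {p}).radical := by
      rw [← vanishingIdeal_zeroLocus_eq_radical (K := K), mem_vanishingIdeal_iff]
      intro x hx
      have hx' := hx p (Ideal.mem_span_singleton_self p)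
      rw [map_prod]
      refine Finset.prod_eq_zero (i := x) ?_ (by simp)
      simpa [aeval_eq_eval] using hx'
    rw [((Ideal.span_singleton_prime hp.ne_zero).2 hp).radical, Ideal.mem_span_singleton,
      hp.dvd_finsetProd_iff] at this
    obtain ⟨s, -, hs⟩ := this
    exact ⟨_, hs⟩
  obtain ⟨a, u, hu⟩ := key 0
  obtain ⟨b, v, hv⟩ := key 1
  have nz : ∀ (i : Fin 2) (a : K), (X i - C a : R2 K) ≠ 0 := fun i a h => by
    have := congrArg (eval (fun _ => a + 1)) h
    simp at this
  have pd : p.totalDegree ≠ 0 := fun h => by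
    rw [totalDegree_eq_zero_iff_eq_C] at h
    have hc : coeff 0 p ≠ 0 := fun h0 => hp.ne_zero (by rw [h, h0, C_0])
    exact hp.not_isUnit (by rw [h]; exact (isUnit_iff_ne_zero.2 hc).map C)
  have cst : ∀ (i : Fin 2) (a : K) (u : R2 K), X i - C a = p * u → ∃ c : K, u = C c := by
    intro i a u hu
    have hu0 : u ≠ 0 := fun h => nz i a (by rw [hu, h, mul_zero])
    have h1 := congrArg totalDegree hu
    rw [totalDegree_mul_of_isDomain hp.ne_zero hu0] at h1
    have h2 : (X i - C a : R2 K).totalDegree ≤ 1 := (totalDegree_sub _ _).trans (by simp)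
    exact ⟨_, (totalDegree_eq_zero_iff_eq_C).1 (by omega)⟩
  obtain ⟨c, rfl⟩ := cst _ _ _ hu
  obtain ⟨c', rfl⟩ := cst _ _ _ hv
  have e1 := congrArg (eval ![a, b+1]) hu
  have e2 := congrArg (eval ![a, b+1]) hv
  simp at e1 e2
  rcases e1 with e1 | e1
  · simp [e1] at e2
  · exact nz 0 a (by rw [hu, e1]; simp)

theorem card_le {K : Type*} [Field K] [IsAlgClosed K] {t : ℕ} (f : Fin t → R2 K) (d : ℕ)
    (htot : ∀ i, (f i).totalDegree ≤ d) (S : Finset (Fin 2 → K))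
    (hS : ∀ s, s ∈ S ↔ ∀ i, eval s (f i) = 0) : S.card ≤ d ^ 2 := by
  classical
  have hnp : ∀ p : R2 K, Prime p → ∃ i, ¬ p ∣ f i := by
    intro p hp
    by_contra! hcon
    refine prime_inf p hp (S.finite_toSet.subset fun s hs => ?_)
    refine (hS s).2 fun i => ?_
    obtain ⟨q, hq⟩ := hcon i
    rw [hq, map_mul, show eval s p = 0 from hs, zero_mul]
  obtain ⟨i0, hi0⟩ : ∃ i, f i ≠ 0 := by
    by_contra! hcon
    have : Infinite K := IsAlgClosed.instInfinite
    refine Set.infinite_univ (α := Fin 2 → K) (S.finite_toSet.subset fun s _ => ?_)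
    exact (hS s).2 fun i => by rw [hcon i, map_zero]
  set g := f i0 with hg
  let L : (Fin t → K) →ₗ[K] R2 K := Fintype.linearCombination K f
  let W : R2 K → Submodule K (Fin t → K) := fun p =>
    ((Ideal.span {p}).restrictScalars K).comap L
  have hW : ∀ p c, c ∈ W p ↔ p ∣ L c := fun p c => by
    simp [W, Ideal.mem_span_singleton]
  obtain ⟨c, hc⟩ : ∃ c, ∀ p ∈ UniqueFactorizationMonoid.factors g, ¬ p ∣ L c := by
    have := Subspace.biUnion_ne_univ_of_top_notMem (k := K) (E := Fin t → K)
      (s := (UniqueFactorizationMonoid.factors g).toFinset.image W) (by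
        intro hmem
        obtain ⟨p, hp, hpt⟩ := Finset.mem_image.1 hmem
        obtain ⟨i, hi⟩ := hnp p (UniqueFactorizationMonoid.prime_of_factor p (by simpa using hp))
        have : Pi.single i 1 ∈ W p := hpt ▸ Submodule.mem_top
        rw [hW] at this
        apply hi
        simpa [L, Fintype.linearCombination_apply_single] using this)
    rw [Set.ne_univ_iff_exists_notMem] at this
    obtain ⟨c, hc⟩ := this
    refine ⟨c, fun p hp hpc => hc ?_⟩
    simp only [Set.mem_iUnion]
    exact ⟨W p, Finset.mem_image.2 ⟨p, by simpa using hp, rfl⟩, (hW _ _).2 hpc⟩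
  have hrel : IsRelPrime g (L c) := by
    refine (UniqueFactorizationMonoid.isRelPrime_iff_no_prime_factors hi0).2 ?_
    intro p hpg hpc hp
    obtain ⟨q, hq, hpq⟩ := UniqueFactorizationMonoid.exists_mem_factors_of_dvd hi0 hp.irreducible hpg
    exact hc q hq (hpq.symm.dvd.trans hpc)
  have hLc : L c = ∑ i, c i • f i := rfl
  have hdeg : (L c).totalDegree ≤ d := by
    rw [hLc]
    refine (totalDegree_finsetSum _ _).trans (Finset.sup_le fun i _ => ?_)
    exact (totalDegree_smul_le _ _).trans (htot i)
  have hSL : ∀ s ∈ S, eval s (L c) = 0 := fun s hs => by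
    rw [hLc, map_sum]
    refine Finset.sum_eq_zero fun i _ => ?_
    simp [smul_eval, (hS s).1 hs i]
  by_cases h0 : L c = 0
  · rw [h0, isRelPrime_zero_right] at hrel
    have : S = ∅ := Finset.eq_empty_of_forall_notMem fun s hs => by
      have := hrel.map (eval s)
      rw [(hS s).1 hs i0] at this
      simp at this
    simp [this]
  · refine (bezout g (L c) hi0 h0 hrel S (fun s hs => (hS s).1 hs i0) hSL).trans ?_
    rw [sq]
    exact Nat.mul_le_mul (htot i0) hdeg

def toMv {K : Type*} [CommRing K] : Biv K →+* R2 K :=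
  Polynomial.eval₂RingHom (Polynomial.eval₂RingHom C (X 0)) (X 1)

theorem eval_toMv {K : Type*} [CommRing K] (s : Fin 2 → K) (f : Biv K) :
    eval s (toMv f) = bEval (s 0) (s 1) f := by
  have : (eval s).comp toMv = (Polynomial.evalRingHom (s 1)).comp
      (Polynomial.mapRingHom (Polynomial.evalRingHom (s 0))) := by
    ext <;> simp [toMv]
  exact RingHom.congr_fun this f

theorem bEval_transform {K : Type*} [CommRing K] (γ : Fin 4 → K) (a b : K) (f : Biv K) :
    bEval a b (transform γ f) = bEval (γ 0 * a + γ 2 * b) (γ 1 * a + γ 3 * b) f := by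
  have : ((Polynomial.evalRingHom b).comp
      (Polynomial.mapRingHom (Polynomial.evalRingHom a))).comp (Polynomial.eval₂RingHom
    (Polynomial.eval₂RingHom
      ((Polynomial.C : Polynomial K →+* Biv K).comp (Polynomial.C : K →+* Polynomial K))
      (Polynomial.C (Polynomial.C (γ 0)) * Polynomial.C Polynomial.X +
        Polynomial.C (Polynomial.C (γ 2)) * Polynomial.X))
    (Polynomial.C (Polynomial.C (γ 1)) * Polynomial.C Polynomial.X +
      Polynomial.C (Polynomial.C (γ 3)) * Polynomial.X)) =
    (Polynomial.evalRingHom (γ 1 * a + γ 3 * b)).comp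
      (Polynomial.mapRingHom (Polynomial.evalRingHom (γ 0 * a + γ 2 * b))) := by
    ext <;> simp
  exact RingHom.congr_fun this f

theorem totalDegree_toMv {K : Type*} [Field K] (f : Biv K) :
    (toMv f).totalDegree ≤ totDeg f := by
  have : toMv f = ∑ j ∈ f.support, ∑ i ∈ (f.coeff j).support,
      C ((f.coeff j).coeff i) * X 0 ^ i * X 1 ^ j := by
    simp only [toMv, Polynomial.coe_eval₂RingHom, Polynomial.eval₂_eq_sum, Polynomial.sum_def,
      Finset.sum_mul]
  rw [this]
  refine (totalDegree_finsetSum _ _).trans (Finset.sup_le fun j hj => ?_)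
  refine (totalDegree_finsetSum _ _).trans (Finset.sup_le fun i hi => ?_)
  have h1 : j + (f.coeff j).natDegree ≤ totDeg f :=
    Finset.le_sup (f := fun j => j + (f.coeff j).natDegree) hj
  have h2 := Polynomial.le_natDegree_of_mem_supp i hi
  refine (totalDegree_mul _ _).trans ?_
  have h3 := totalDegree_mul (C ((f.coeff j).coeff i)) (X 0 ^ i : R2 K)
  simp only [totalDegree_X_pow, totalDegree_C] at h3 ⊢
  omega

end MvPolynomial.AvoidHyp

/-- let `K` be algebraically closed and `F = (f_1, …, f_t)` in `K[x,y]`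
of total degrees at most `d ≥ 1` with `V(F) ⊆ K²` finite. Then there is a nonzero
polynomial `Y₂` in four variables, of total degree at most `d⁴`, such that for every
`γ ∈ K⁴` with `Y₂(γ) ≠ 0` and the matrix `[γᵢⱼ]` invertible, the projection
`(α, β) ↦ α` is injective on `V(f_1^γ, …, f_t^γ)`. -/
theorem avoid_hypersurface_shear {K : Type*} [Field K] [IsAlgClosed K] {t : ℕ}
    (f : Fin t → Biv K) (d : ℕ) (hd : 1 ≤ d)
    (htot : ∀ i, totDeg (f i) ≤ d)
    (hfin : {p : K × K | ∀ i, bEval p.1 p.2 (f i) = 0}.Finite) :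
    ∃ Y₂ : MvPolynomial (Fin 4) K, Y₂ ≠ 0 ∧ Y₂.totalDegree ≤ d ^ 4 ∧
      ∀ γ : Fin 4 → K, MvPolynomial.eval γ Y₂ ≠ 0 →
        γ 0 * γ 3 - γ 1 * γ 2 ≠ 0 →
        Set.InjOn Prod.fst
          {p : K × K | ∀ i, bEval p.1 p.2 (transform γ (f i)) = 0} := by
  classical
  let S := hfin.toFinset
  let T : Finset (Fin 2 → K) := S.map (finTwoArrowEquiv K).symm.toEmbedding
  have hT : T.card ≤ d ^ 2 := by
    refine MvPolynomial.AvoidHyp.card_le (fun i => MvPolynomial.AvoidHyp.toMv (f i)) d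
      (fun i => (MvPolynomial.AvoidHyp.totalDegree_toMv _).trans (htot i)) T fun s => ?_
    simp only [MvPolynomial.AvoidHyp.eval_toMv, T, Finset.mem_map_equiv, S, Set.Finite.mem_toFinset]
    simp
  have hSc : S.card ≤ d ^ 2 := by simpa [T] using hT
  let ℓ : (K × K) × (K × K) → MvPolynomial (Fin 4) K := fun q =>
    MvPolynomial.C (q.1.1 - q.2.1) * MvPolynomial.X 3
      - MvPolynomial.C (q.1.2 - q.2.2) * MvPolynomial.X 2
  refine ⟨∏ q ∈ S.offDiag, ℓ q, ?_, ?_, ?_⟩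
  · refine Finset.prod_ne_zero_iff.2 fun q hq h0 => ?_
    have h1 := congrArg (MvPolynomial.eval ![0, 0, 0, 1]) h0
    have h2 := congrArg (MvPolynomial.eval ![0, 0, 1, 0]) h0
    simp [ℓ] at h1 h2
    exact (Finset.mem_offDiag.1 hq).2.2 (Prod.ext (sub_eq_zero.1 h1) (sub_eq_zero.1 h2).symm)
  · refine (MvPolynomial.totalDegree_finsetProd _ _).trans ?_
    refine (Finset.sum_le_card_nsmul _ _ 1 fun q _ => ?_).trans ?_
    · refine (MvPolynomial.totalDegree_sub _ _).trans (max_le ?_ ?_) <;>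
      · refine (MvPolynomial.totalDegree_mul _ _).trans ?_
        rw [MvPolynomial.totalDegree_C, MvPolynomial.totalDegree_X]
    · rw [Finset.offDiag_card]
      simp only [smul_eq_mul, mul_one]
      calc _ ≤ S.card * S.card := Nat.sub_le _ _
        _ ≤ d ^ 2 * d ^ 2 := Nat.mul_le_mul hSc hSc
        _ = d ^ 4 := by ring
  · intro γ hγ hdet
    rintro ⟨a, b⟩ hp ⟨a', b'⟩ hq hab
    obtain rfl : a = a' := hab
    simp only [Set.mem_ofPred_eq, MvPolynomial.AvoidHyp.bEval_transform] at hp hq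
    by_contra hne
    have hb : b - b' ≠ 0 := fun h => hne (by rw [sub_eq_zero.1 h])
    apply hγ
    rw [map_prod]
    refine Finset.prod_eq_zero (i := ((γ 0 * a + γ 2 * b, γ 1 * a + γ 3 * b),
      (γ 0 * a + γ 2 * b', γ 1 * a + γ 3 * b'))) ?_ ?_
    · rw [Finset.mem_offDiag]
      refine ⟨by simpa [S] using hp, by simpa [S] using hq, fun h => ?_⟩
      simp only [Prod.mk.injEq] at h
      have h2 : γ 2 = 0 := (mul_eq_zero.1 (show γ 2 * (b - b') = 0 by linear_combination h.1)).resolve_right hb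
      have h3 : γ 3 = 0 := (mul_eq_zero.1 (show γ 3 * (b - b') = 0 by linear_combination h.2)).resolve_right hb
      apply hdet
      rw [h2, h3]; ring
    · simp [ℓ]; ring
end
end

section
/- Let F = (f_1,…,f_t) be in ℤ[x,y] with t ≥ 2, generating a zero-dimensional ideal I in ℚ[x,y], with all f_i of y-degree at most d_y, total degree at most d ≥ 1, and all integer coefficients of absolute value at most e^h. Let G = (g_0,…,g_s) be the reduced minimal lexicographic Gröbner basis of I (for x ≺ y). If there exists i in {1,…,t} such that the coefficient of y^{d_y} in f_i is a nonzero integer constant, then there exists a nonzero integer β such that: (a) β·g_j ∈ ℤ[x,y] for all j; (b) |β| ≤ exp(C(t,d,Δ_1(d_y),h)) and every coefficient of every β·g_j has absolute value at most exp(C(t,d,Δ_1(d_y),h)); and (c) for every prime p not dividing β, the images of g_0,…,g_s in F_p[x,y] (well defined since all denominators divide β) form the reduced minimal lexicographic Gröbner basis of the ideal generated by f_1 mod p, …, f_t mod p in F_p[x,y]. -/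
noncomputable section

open Polynomial

variable {k : Type*} [CommRing k]

/-- The leading monomial of `f`, as the pair (y-exponent, x-exponent), for the
lexicographic order induced by `x ≺ y`. -/
def lmon (f : Biv k) : ℕ × ℕ := (f.natDegree, f.leadingCoeff.natDegree)

/-- Divisibility of monomials: `x^{p.2} y^{p.1}` divides `x^{q.2} y^{q.1}`. -/
def monDvd (p q : ℕ × ℕ) : Prop := p.1 ≤ q.1 ∧ p.2 ≤ q.2

/-- Lexicographic comparison of monomials, `y`-exponent first. -/
def monLt (p q : ℕ × ℕ) : Prop := p.1 < q.1 ∨ (p.1 = q.1 ∧ p.2 < q.2)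

/-- The monomial `x^{m.2} y^{m.1}` occurs in `f` (has a nonzero coefficient). -/
def occursIn (f : Biv k) (m : ℕ × ℕ) : Prop := (f.coeff m.1).coeff m.2 ≠ 0

/-- `G` is a Gröbner basis of `I` for the lexicographic order with `x ≺ y`:
its elements are nonzero elements of `I`, and the leading monomial of any nonzero
element of `I` is divisible by the leading monomial of some element of `G`. -/
def IsGB (G : List (Biv k)) (I : Ideal (Biv k)) : Prop :=
  (∀ g ∈ G, g ≠ 0 ∧ g ∈ I) ∧
  ∀ f ∈ I, f ≠ 0 → ∃ g ∈ G, monDvd (lmon g) (lmon f)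

/-- `f` is monic w.r.t. lex `x ≺ y`: the coefficient of its leading monomial is `1`. -/
def lexMonic (f : Biv k) : Prop := f.leadingCoeff.Monic

/-- `g 0, …, g s` is the reduced minimal lexicographic Gröbner basis of `I`,
listed in decreasing order of leading monomials. -/
def IsReducedGB {s : ℕ} (g : Fin (s + 1) → Biv k) (I : Ideal (Biv k)) : Prop :=
  IsGB (List.ofFn g) I ∧
  (∀ j, lexMonic (g j)) ∧
  (∀ j l, j ≠ l → ∀ m : ℕ × ℕ, occursIn (g j) m → ¬ monDvd (lmon (g l)) m) ∧
  (∀ j l : Fin (s + 1), j < l → monLt (lmon (g l)) (lmon (g j)))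

/-- Every monomial of `f` of `y`-degree `< i` is reduced w.r.t. the family `g`. -/
def reducedBelow {s : ℕ} (g : Fin (s + 1) → Biv k) (i : ℕ) (f : Biv k) : Prop :=
  ∀ m : ℕ × ℕ, m.1 < i → occursIn f m → ∀ j, ¬ monDvd (lmon (g j)) m

/-- `A` is the detaching sequence associated to the reduced Gröbner basis `g` of `I`:
`A i = 0` for `i < n_s`, `A (n_j) = g j`, and otherwise `A i` is obtained from
`y * A (i-1)` by reducing the terms of `y`-degree `< i` modulo `g`
(so `A i - y * A (i-1)` lies in `I` and has `y`-degree `< i`, and the part of `A i`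
of `y`-degree `< i` is reduced w.r.t. `g`). -/
def IsDetachingSeq {s : ℕ} (g : Fin (s + 1) → Biv k) (I : Ideal (Biv k))
    (A : ℕ → Biv k) : Prop :=
  (∀ i, i < (g (Fin.last s)).natDegree → A i = 0) ∧
  (∀ j, A ((g j).natDegree) = g j) ∧
  (∀ i, (g (Fin.last s)).natDegree ≤ i → (∀ j, (g j).natDegree ≠ i) →
    (A i - Polynomial.X * A (i - 1)) ∈ I ∧
    (A i - Polynomial.X * A (i - 1)).degree < (i : WithBot ℕ) ∧
    reducedBelow g i (A i))

/-- The height bound `B(n,d,h) = (N+1)h + N log N + log(n(d+1))` with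
`N = n²d − nd + n`, for Hermite normal forms of `n × n` matrices of degree `≤ d`
and height `≤ h` over `ℤ[x]`. -/
def Bfun (n d : ℕ) (h : ℝ) : ℝ :=
  (((n ^ 2 * d - n * d + n : ℕ) : ℝ) + 1) * h +
    ((n ^ 2 * d - n * d + n : ℕ) : ℝ) * Real.log ((n ^ 2 * d - n * d + n : ℕ) : ℝ) +
    Real.log ((n : ℝ) * ((d : ℝ) + 1))

/-- The height bound `C(t,d,D,h) = B(tD,d,h) + h + log 2`. -/
def Cfun (t d D : ℕ) (h : ℝ) : ℝ := Bfun (t * D) d h + h + Real.log 2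

/-- `Δ₁(d_y) = d_y`. -/
def Delta1 (dy : ℕ) : ℕ := dy

/-- `Δ₂(d) = 2d′² + d′` with `d′ = max(d,3)`. -/
def Delta2 (d : ℕ) : ℕ := 2 * max d 3 ^ 2 + max d 3

/-- `Δ₃(d) = 16d′⁴ + 2d′² + 2d′` with `d′ = max(d,3)`. -/
def Delta3 (d : ℕ) : ℕ := 16 * max d 3 ^ 4 + 2 * max d 3 ^ 2 + 2 * max d 3

/-- The inclusion `ℤ[x,y] → ℚ[x,y]`. -/
def toQ : Biv ℤ →+* Biv ℚ :=
  Polynomial.mapRingHom (Polynomial.mapRingHom (Int.castRingHom ℚ))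

/-- The reduction `ℤ[x,y] → F_p[x,y]`. -/
def toP (p : ℕ) : Biv ℤ →+* Biv (ZMod p) :=
  Polynomial.mapRingHom (Polynomial.mapRingHom (Int.castRingHom (ZMod p)))


theorem det_select {m ι R : Type*} [Fintype m] [DecidableEq m] [Fintype ι] [CommRing R]
    (A : Matrix m ι R) (U : Matrix ι m R) (h : (A * U).det ≠ 0) :
    ∃ φ : m → ι, (A.submatrix id φ).det ≠ 0 := by
  classical
  by_contra hcon
  push Not at hcon
  apply h
  rw [← Matrix.det_transpose]
  have e : (A * U).transpose = fun r => ∑ j, U j r • A.transpose j := by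
    ext r c
    simp [Matrix.mul_apply, Finset.sum_apply, mul_comm]
  rw [e]
  change (Matrix.detRowAlternating (R := R) (n := m)).toMultilinearMap _ = 0
  rw [MultilinearMap.map_sum]
  apply Finset.sum_eq_zero
  intro φ _
  rw [MultilinearMap.map_smul_univ]
  have := hcon φ
  rw [← Matrix.det_transpose] at this
  change _ • Matrix.det _ = 0
  have e2 : (fun i => A.transpose (φ i)) = (A.submatrix id φ).transpose := by
    ext; rfl
  rw [e2, this, smul_zero]

theorem select_inj {m ι R : Type*} [Fintype m] [DecidableEq m] [CommRing R]
    (A : Matrix m ι R) (φ : m → ι) (h : (A.submatrix id φ).det ≠ 0) :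
    Function.Injective φ := by
  intro a b hab
  by_contra hne
  apply h
  apply Matrix.det_zero_of_column_eq hne
  intro i
  simp [hab]

theorem natDegree_det_le' {m R : Type*} [Fintype m] [DecidableEq m] [CommRing R]
    (M : Matrix m m (Polynomial R)) (e : m → ℕ) (h : ∀ i j, (M i j).natDegree ≤ e i) :
    M.det.natDegree ≤ ∑ i, e i := by
  rw [← Matrix.det_transpose, Matrix.det_apply]
  refine Polynomial.natDegree_sum_le_of_forall_le _ _ ?_
  intro σ _
  refine (Polynomial.natDegree_smul_le _ _).trans ?_
  refine (Polynomial.natDegree_prod_le _ _).trans ?_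
  exact Finset.sum_le_sum fun i _ => h _ _

theorem natDegree_adj_le {m R : Type*} [Fintype m] [DecidableEq m] [CommRing R]
    (M : Matrix m m (Polynomial R)) (d : ℕ) (h : ∀ i j, (M i j).natDegree ≤ d) (i j : m) :
    (M.adjugate i j).natDegree ≤ (Fintype.card m - 1) * d := by
  rw [Matrix.adjugate_apply]
  refine (natDegree_det_le' _ (fun r => if r = j then 0 else d) ?_).trans ?_
  · intro r c
    by_cases hr : r = j
    · subst hr
      by_cases hc : c = i
      · subst hc; simp
      · simp [hc]
    · simp [hr, h]
  · rw [← Finset.sum_erase_add _ _ (Finset.mem_univ j), if_pos rfl, add_zero,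
      Finset.sum_congr rfl (g := fun _ => d) (fun x hx => if_neg (Finset.ne_of_mem_erase hx))]
    simp [Finset.card_erase_of_mem]

/-- coefficient at a monomial -/
def cf (f : Biv k) (m : ℕ × ℕ) : k := (f.coeff m.1).coeff m.2

theorem cf_ext {f g : Biv k} (h : ∀ m, cf f m = cf g m) : f = g := by
  ext a b
  exact h (a, b)

theorem cf_add (f g : Biv k) (m) : cf (f + g) m = cf f m + cf g m := by simp [cf]
theorem cf_sub (f g : Biv k) (m) : cf (f - g) m = cf f m - cf g m := by simp [cf]
theorem cf_zero (m) : cf (0 : Biv k) m = 0 := by simp [cf]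
theorem cf_smul (c : k) (f : Biv k) (m) : cf (c • f) m = c * cf f m := by simp [cf]
theorem cf_CC (c : k) (f : Biv k) (m) : cf (C (C c) * f) m = c * cf f m := by simp [cf]
theorem cf_sum {ι : Type*} (s : Finset ι) (f : ι → Biv k) (m) :
    cf (∑ i ∈ s, f i) m = ∑ i ∈ s, cf (f i) m := by
  simp [cf, Polynomial.finsetSum_coeff]
theorem CC_smul (c : k) (f : Biv k) : C (C c) * f = c • f := by
  apply cf_ext; intro m; rw [cf_CC, cf_smul]

theorem cf_toQ (f : Biv ℤ) (m) : cf (toQ f) m = ((cf f m : ℤ) : ℚ) := by simp [cf, toQ]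
theorem cf_toP (p : ℕ) (f : Biv ℤ) (m) : cf (toP p f) m = ((cf f m : ℤ) : ZMod p) := by simp [cf, toP]

theorem toQ_inj {f g : Biv ℤ} (h : toQ f = toQ g) : f = g := by
  apply cf_ext; intro m
  have := congrArg (fun q => cf q m) h
  simpa [cf_toQ] using this

theorem cf_lmon (f : Biv k) : cf f (lmon f) = f.leadingCoeff.leadingCoeff := rfl

theorem cf_lmon_ne (f : Biv k) (hf : f ≠ 0) : cf f (lmon f) ≠ 0 := by
  rw [cf_lmon]; simpa using hf

theorem cf_above (f : Biv k) (m : ℕ × ℕ) (hm : monLt (lmon f) m) : cf f m = 0 := by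
  rcases hm with hm | ⟨h1, h2⟩
  · simp only [lmon] at hm
    simp [cf, Polynomial.coeff_eq_zero_of_natDegree_lt hm]
  · simp only [lmon] at h1 h2
    rw [cf, ← h1]
    exact Polynomial.coeff_eq_zero_of_natDegree_lt h2

theorem monLt_trans {a b c : ℕ × ℕ} (h1 : monLt a b) (h2 : monLt b c) : monLt a c := by
  unfold monLt at *; omega

theorem monLt_tri (a b : ℕ × ℕ) : monLt a b ∨ a = b ∨ monLt b a := by
  unfold monLt; rw [Prod.ext_iff]; omega

theorem monLt_irrefl (a : ℕ × ℕ) : ¬ monLt a a := by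
  unfold monLt; omega

theorem cf_le (f : Biv k) (m : ℕ × ℕ) (hm : cf f m ≠ 0) : m = lmon f ∨ monLt m (lmon f) := by
  rcases monLt_tri m (lmon f) with h | h | h
  · exact Or.inr h
  · exact Or.inl h
  · exact absurd (cf_above f m h) hm

theorem lmon_of {f : Biv k} {μ : ℕ × ℕ} (h1 : cf f μ ≠ 0)
    (h2 : ∀ m, cf f m ≠ 0 → m = μ ∨ monLt m μ) : lmon f = μ := by
  have hf : f ≠ 0 := by rintro rfl; exact h1 (cf_zero _)
  rcases h2 _ (cf_lmon_ne f hf) with h | h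
  · exact h
  · exact absurd (cf_above f μ h) h1

theorem cf_shift (f : Biv k) (a b : ℕ) (m : ℕ × ℕ) :
    cf (X ^ a * (C (X ^ b) * f)) m =
      if a ≤ m.1 ∧ b ≤ m.2 then cf f (m.1 - a, m.2 - b) else 0 := by
  unfold cf
  rw [coeff_X_pow_mul']
  by_cases ha : a ≤ m.1
  · rw [if_pos ha, coeff_C_mul, coeff_X_pow_mul']
    simp [ha]
  · simp [ha]

theorem monLt_wf : WellFounded (monLt) := by
  have : WellFounded (fun a b : ℕ × ℕ => toLex a < toLex b) :=
    InvImage.wf toLex wellFounded_lt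
  refine Subrelation.wf ?_ this
  intro a b h
  rw [Prod.Lex.toLex_lt_toLex]
  exact h

theorem division {F : Type*} [Field F] {s : ℕ} (G : Fin (s + 1) → Biv F)
    (hG : ∀ j, lexMonic (G j)) (J : Ideal (Biv F)) (hJ : ∀ j, G j ∈ J) (μ : ℕ × ℕ) :
    ∀ f : Biv F, (∀ m, cf f m ≠ 0 → monLt m μ) →
      ∃ R, f - R ∈ J ∧ ∀ m, cf R m ≠ 0 → monLt m μ ∧ ∀ j, ¬ monDvd (lmon (G j)) m := by
  induction μ using monLt_wf.induction with
  | _ μ ih =>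
  intro f hf
  by_cases h0 : f = 0
  · exact ⟨0, by simp [h0], by simp [cf_zero]⟩
  have hν := hf _ (cf_lmon_ne f h0)
  have step : ∀ q : Biv F, cf q (lmon f) = 1 → (∀ m, cf q m ≠ 0 → m = lmon f ∨ monLt m (lmon f)) →
      ∀ m, cf (f - cf f (lmon f) • q) m ≠ 0 → monLt m (lmon f) := by
    intro q h1 h2 m hm
    rw [cf_sub, cf_smul] at hm
    by_cases hmf : m = lmon f
    · subst hmf; rw [h1] at hm; simp at hm
    by_cases hfm : cf f m = 0
    · have : cf q m ≠ 0 := by intro h; simp [hfm, h] at hm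
      exact (h2 m this).resolve_left hmf
    · exact (cf_le f m hfm).resolve_left hmf
  by_cases hd : ∃ j, monDvd (lmon (G j)) (lmon f)
  · obtain ⟨j, hj⟩ := hd
    have hq : cf (G j) (lmon (G j)) = 1 := hG j
    obtain ⟨R, hR1, hR2⟩ := ih _ hν _ (step
      (X ^ ((lmon f).1 - (lmon (G j)).1) * (C (X ^ ((lmon f).2 - (lmon (G j)).2)) * G j)) (by
        rw [cf_shift, if_pos ⟨by omega, by omega⟩, ← hq]
        congr 1
        obtain ⟨ha, hb⟩ := hj
        ext <;> simp <;> omega) (by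
        intro m hm
        rw [cf_shift] at hm
        split_ifs at hm with h
        · have := cf_le _ _ hm
          obtain ⟨ha, hb⟩ := hj
          unfold monLt at *
          rw [Prod.ext_iff] at *
          simp at this
          omega
        · simp at hm))
    refine ⟨R, ?_, fun m hm => ⟨monLt_trans (hR2 m hm).1 hν, (hR2 m hm).2⟩⟩
    have : f - R = (f - cf f (lmon f) • (X ^ ((lmon f).1 - (lmon (G j)).1) *
        (C (X ^ ((lmon f).2 - (lmon (G j)).2)) * G j)) - R) +
        C (C (cf f (lmon f))) * (X ^ ((lmon f).1 - (lmon (G j)).1) *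
        (C (X ^ ((lmon f).2 - (lmon (G j)).2)) * G j)) := by
      rw [CC_smul]; ring
    rw [this]
    refine J.add_mem hR1 ?_
    exact J.mul_mem_left _ (J.mul_mem_left _ (J.mul_mem_left _ (hJ j)))
  · push Not at hd
    have c1 : ∀ m, cf (1 : Biv F) m = if m = (0, 0) then 1 else 0 := by
      rintro ⟨a, b⟩
      simp only [cf, Polynomial.coeff_one, Prod.mk.injEq]
      by_cases ha : a = 0 <;> simp [ha, Polynomial.coeff_one]
    have hq : ∀ m, cf (X ^ (lmon f).1 * (C (X ^ (lmon f).2) * 1) : Biv F) m =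
        if m = lmon f then 1 else 0 := by
      intro m
      rw [cf_shift, c1]
      by_cases h : m = lmon f
      · simp [h]
      · rw [if_neg h]
        simp only [Prod.mk.injEq]
        rw [Prod.ext_iff] at h
        split_ifs <;> first | rfl | omega
    obtain ⟨R, hR1, hR2⟩ := ih _ hν _ (step
      (X ^ ((lmon f).1) * (C (X ^ ((lmon f).2)) * 1)) (by rw [hq, if_pos rfl]) (by
        intro m hm
        rw [hq] at hm
        left
        by_contra h
        simp [h] at hm))
    refine ⟨R + cf f (lmon f) • (X ^ ((lmon f).1) * (C (X ^ ((lmon f).2)) * 1)), ?_, ?_⟩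
    · convert hR1 using 1
      ring
    · intro m hm
      rw [cf_add, cf_smul, hq] at hm
      by_cases h : m = lmon f
      · rw [h]; exact ⟨hν, hd⟩
      · have : cf R m ≠ 0 := by simpa [h] using hm
        exact ⟨monLt_trans (hR2 m this).1 hν, (hR2 m this).2⟩

theorem division' {F : Type*} [Field F] {s : ℕ} (G : Fin (s + 1) → Biv F)
    (hG : ∀ j, lexMonic (G j)) (J : Ideal (Biv F)) (hJ : ∀ j, G j ∈ J)
    (f : Biv F) (hf : f ≠ 0) (hfd : ∀ j, ¬ monDvd (lmon (G j)) (lmon f)) (hfJ : f ∈ J) :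
    ∃ R, R ≠ 0 ∧ R ∈ J ∧ ∀ m, cf R m ≠ 0 → ∀ j, ¬ monDvd (lmon (G j)) m := by
  classical
  have c1 : ∀ m, cf (1 : Biv F) m = if m = (0, 0) then 1 else 0 := by
    rintro ⟨a, b⟩
    simp only [cf, Polynomial.coeff_one, Prod.mk.injEq]
    by_cases ha : a = 0 <;> simp [ha, Polynomial.coeff_one]
  have hq : ∀ m, cf (X ^ (lmon f).1 * (C (X ^ (lmon f).2) * 1) : Biv F) m =
      if m = lmon f then 1 else 0 := by
    intro m
    rw [cf_shift, c1]
    by_cases h : m = lmon f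
    · simp [h]
    · rw [if_neg h]
      simp only [Prod.mk.injEq]
      rw [Prod.ext_iff] at h
      split_ifs <;> first | rfl | omega
  obtain ⟨R, hR1, hR2⟩ := division G hG J hJ (lmon f)
    (f - cf f (lmon f) • (X ^ (lmon f).1 * (C (X ^ (lmon f).2) * 1))) (by
      intro m hm
      rw [cf_sub, cf_smul, hq] at hm
      by_cases h : m = lmon f
      · simp [h] at hm
      · have : cf f m ≠ 0 := by simpa [h] using hm
        exact (cf_le f m this).resolve_left h)
  have hR3 : ∀ m, cf (R + cf f (lmon f) • (X ^ (lmon f).1 * (C (X ^ (lmon f).2) * 1))) m =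
      cf R m + cf f (lmon f) * if m = lmon f then 1 else 0 := by
    intro m; rw [cf_add, cf_smul, hq]
  refine ⟨R + cf f (lmon f) • (X ^ (lmon f).1 * (C (X ^ (lmon f).2) * 1)), ?_, ?_, ?_⟩
  · intro h
    have h2 := hR3 (lmon f)
    rw [h, cf_zero] at h2
    have h3 : cf R (lmon f) = 0 := by
      by_contra h3
      exact monLt_irrefl _ (hR2 _ h3).1
    rw [h3] at h2
    simp at h2
    exact cf_lmon_ne f hf h2.symm
  · have := J.sub_mem hfJ hR1
    convert this using 1
    ring
  · intro m hm
    rw [hR3] at hm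
    by_cases h : m = lmon f
    · rw [h]; exact hfd
    · have : cf R m ≠ 0 := by simpa [h] using hm
      exact (hR2 m this).2

/-- the selected square matrix -/
def selMat {Γ : Type*} (col : Γ → Biv ℤ) (S : Finset (ℕ ×ₗ ℕ)) (φ : S → Γ) : Matrix S S ℤ :=
  Matrix.of fun s s' : S => cf (col (φ s')) (ofLex s.1)

/-- span of columns -/
abbrev colSpan {F Γ : Type*} [Field F] (col : Γ → Biv F) : Submodule F (Biv F) :=
  Submodule.span F (Set.range col)

theorem echelon {Γ : Type*} [Fintype Γ] (col : Γ → Biv ℤ) :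
    ∃ (S : Finset (ℕ ×ₗ ℕ)) (φ : S → Γ),
      (selMat col S φ).det ≠ 0 ∧ Function.Injective φ ∧
      (∀ s ∈ S, ∃ w ∈ colSpan (fun γ => toQ (col γ)), w ≠ 0 ∧ lmon w = ofLex s) ∧
      (∀ w ∈ colSpan (fun γ => toQ (col γ)), (∀ s ∈ S, cf w (ofLex s) = 0) → w = 0) ∧
      (∀ w ∈ colSpan (fun γ => toQ (col γ)), w ≠ 0 → toLex (lmon w) ∈ S) := by
  classical
  set W := colSpan (fun γ => toQ (col γ)) with hW
  -- degree bound
  obtain ⟨B, hB⟩ : ∃ B : ℕ, ∀ w ∈ W, ∀ m : ℕ × ℕ, cf w m ≠ 0 → m.1 < B ∧ m.2 < B := by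
    have h1 : ∀ w : Biv ℚ, ∃ B : ℕ, ∀ m : ℕ × ℕ, cf w m ≠ 0 → m.1 < B ∧ m.2 < B := by
      intro w
      refine ⟨w.natDegree + (w.support.sup fun j => (w.coeff j).natDegree) + 1, ?_⟩
      intro m hm
      have ha : w.coeff m.1 ≠ 0 := by intro h; simp [cf, h] at hm
      have h2 := Polynomial.le_natDegree_of_ne_zero ha
      have h3 := Polynomial.le_natDegree_of_ne_zero hm
      have h4 := Finset.le_sup (f := fun j => (w.coeff j).natDegree)
        (Polynomial.mem_support_iff.2 ha)
      omega
    choose Bf hBf using h1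
    refine ⟨Finset.univ.sup fun γ => Bf (toQ (col γ)), ?_⟩
    intro w hw
    induction hw using Submodule.span_induction with
    | mem x hx =>
      obtain ⟨γ, rfl⟩ := hx
      intro m hm
      have h1 := hBf (toQ (col γ)) m hm
      have h2 := Finset.le_sup (f := fun γ => Bf (toQ (col γ))) (Finset.mem_univ γ)
      omega
    | zero => intro m hm; simp [cf_zero] at hm
    | add x y _ _ hx hy =>
      intro m hm
      rw [cf_add] at hm
      by_cases h : cf x m = 0
      · exact hy m (by intro h'; simp [h, h'] at hm)
      · exact hx m h
    | smul a x _ hx =>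
      intro m hm
      rw [cf_smul] at hm
      exact hx m (right_ne_zero_of_mul hm)
  let S : Finset (ℕ ×ₗ ℕ) := ((Finset.range B ×ˢ Finset.range B).map toLex.toEmbedding).filter
    (fun s => ∃ w ∈ W, w ≠ 0 ∧ lmon w = ofLex s)
  have hS : ∀ s, s ∈ S ↔ ∃ w ∈ W, w ≠ 0 ∧ lmon w = ofLex s := by
    intro s
    simp only [S, Finset.mem_filter, and_iff_right_iff_imp]
    rintro ⟨w, hw, hw0, hws⟩
    have := hB w hw _ (cf_lmon_ne w hw0)
    rw [hws] at this
    simp only [Finset.mem_map, Finset.mem_product, Finset.mem_range]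
    exact ⟨ofLex s, this, rfl⟩
  have hS2 : ∀ s : S, ∃ w ∈ W, w ≠ 0 ∧ lmon w = ofLex s.1 := fun s => (hS s.1).1 s.2
  choose w hwW hw0 hws using hS2
  have hU : ∀ s, ∃ u : Γ → ℚ, ∑ γ, u γ • toQ (col γ) = w s := fun s =>
    (Submodule.mem_span_range_iff_exists_fun ℚ).1 (hwW s)
  choose U hU using hU
  let A : Matrix S Γ ℚ := Matrix.of fun s γ => cf (toQ (col γ)) (ofLex s.1)
  let UU : Matrix Γ S ℚ := Matrix.of fun γ s => U s γ
  have hAU : ∀ s s', (A * UU) s s' = cf (w s') (ofLex s.1) := by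
    intro s s'
    rw [← hU s', cf_sum, Matrix.mul_apply]
    refine Finset.sum_congr rfl fun γ _ => ?_
    rw [cf_smul, mul_comm]; rfl
  have hdet : (A * UU).det ≠ 0 := by
    rw [Matrix.det_of_isUpperTriangular]
    · rw [Finset.prod_ne_zero_iff]
      intro s _
      rw [hAU, ← hws]
      exact cf_lmon_ne _ (hw0 s)
    · intro s s' hss
      rw [hAU]
      apply cf_above
      rw [hws]
      have : s'.1 < s.1 := hss
      rw [Prod.Lex.lt_iff] at this
      exact this
  obtain ⟨φ, hφ⟩ := det_select A UU hdet
  refine ⟨S, φ, ?_, select_inj A φ hφ, fun s hs => (hS s).1 hs, ?_,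
    fun v hv hv0 => (hS _).2 ⟨v, hv, hv0, rfl⟩⟩
  · intro h
    apply hφ
    have : A.submatrix id φ = (selMat col S φ).map (Int.castRingHom ℚ) := by
      ext s s'
      simp [A, selMat, cf_toQ]
    rw [this]
    change Matrix.det ((Int.castRingHom ℚ).mapMatrix _) = 0
    rw [← RingHom.map_det, h, map_zero]
  · intro v hv hvs
    by_contra hv0
    exact cf_lmon_ne v hv0 (hvs (toLex (lmon v)) ((hS _).2 ⟨v, hv, hv0, rfl⟩))

theorem echelon_Q {Γ : Type*} (col : Γ → Biv ℤ) (S : Finset (ℕ ×ₗ ℕ)) (φ : S → Γ)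
    (h3 : ∀ w ∈ colSpan (fun γ => toQ (col γ)), (∀ s ∈ S, cf w (ofLex s) = 0) → w = 0)
    (w : Biv ℚ) (hw : w ∈ colSpan (fun γ => toQ (col γ))) :
    C (C ((selMat col S φ).det : ℚ)) * w =
      ∑ s, C (C (∑ s', ((selMat col S φ).adjugate s s' : ℚ) * cf w (ofLex s'.1))) *
        toQ (col (φ s)) := by
  rw [← sub_eq_zero]
  apply h3
  · simp only [CC_smul]
    refine Submodule.sub_mem _ (Submodule.smul_mem _ _ hw) (Submodule.sum_mem _ fun s _ => ?_)
    exact Submodule.smul_mem _ _ (Submodule.subset_span ⟨φ s, rfl⟩)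
  · intro s hs
    set P := selMat col S φ with hP
    have key : ∀ s'' : S, ∑ s', (P ⟨s, hs⟩ s' : ℚ) * (P.adjugate s' s'' : ℚ) =
        if s'' = ⟨s, hs⟩ then (P.det : ℚ) else 0 := by
      intro s''
      have := congrFun (congrFun (Matrix.mul_adjugate P) ⟨s, hs⟩) s''
      rw [Matrix.mul_apply] at this
      have h2 := congrArg (fun z : ℤ => (z : ℚ)) this
      simp only [Int.cast_sum, Int.cast_mul] at h2
      rw [h2, Matrix.smul_apply, Matrix.one_apply]
      by_cases h : s'' = ⟨s, hs⟩
      · rw [if_pos h.symm, if_pos h]; simp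
      · rw [if_neg (fun h' => h h'.symm), if_neg h]; simp
    rw [cf_sub, cf_CC, cf_sum]
    simp only [cf_CC, cf_toQ]
    have e : ∀ x : S, (∑ s', (P.adjugate x s' : ℚ) * cf w (ofLex s'.1)) *
        ((cf (col (φ x)) (ofLex s) : ℤ) : ℚ) =
        ∑ s', cf w (ofLex s'.1) * ((P ⟨s, hs⟩ x : ℚ) * (P.adjugate x s' : ℚ)) := by
      intro x
      rw [Finset.sum_mul]
      refine Finset.sum_congr rfl fun s' _ => ?_
      have : P ⟨s, hs⟩ x = cf (col (φ x)) (ofLex s) := rfl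
      rw [this]; ring
    rw [Finset.sum_congr rfl fun x _ => e x, Finset.sum_comm]
    simp only [← Finset.mul_sum, key]
    simp [mul_comm]

theorem echelon_Z {Γ : Type*} (col : Γ → Biv ℤ) (S : Finset (ℕ ×ₗ ℕ)) (φ : S → Γ)
    (h3 : ∀ w ∈ colSpan (fun γ => toQ (col γ)), (∀ s ∈ S, cf w (ofLex s) = 0) → w = 0) (γ : Γ) :
    C (C (selMat col S φ).det) * col γ =
      ∑ s, C (C (∑ s', (selMat col S φ).adjugate s s' * cf (col γ) (ofLex s'.1))) *
        col (φ s) := by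
  apply toQ_inj
  have hCC : ∀ z : ℤ, toQ (C (C z)) = C (C (z : ℚ)) := by intro z; simp [toQ]
  rw [map_mul, map_sum, hCC, echelon_Q col S φ h3 _ (Submodule.subset_span ⟨γ, rfl⟩)]
  refine Finset.sum_congr rfl fun s _ => ?_
  rw [map_mul, hCC]
  simp [cf_toQ]

theorem echelon_P {Γ : Type*} (col : Γ → Biv ℤ) (S : Finset (ℕ ×ₗ ℕ)) (φ : S → Γ)
    (h3 : ∀ w ∈ colSpan (fun γ => toQ (col γ)), (∀ s ∈ S, cf w (ofLex s) = 0) → w = 0)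
    (p : ℕ) [Fact p.Prime] (hp : ¬ (p : ℤ) ∣ (selMat col S φ).det)
    (w : Biv (ZMod p)) (hw : w ∈ colSpan (fun γ => toP p (col γ)))
    (hws : ∀ s ∈ S, cf w (ofLex s) = 0) : w = 0 := by
  have hCC : ∀ z : ℤ, toP p (C (C z)) = C (C (z : ZMod p)) := by intro z; simp [toP]
  have key : C (C ((selMat col S φ).det : ZMod p)) * w =
      ∑ s, C (C (∑ s', ((selMat col S φ).adjugate s s' : ZMod p) * cf w (ofLex s'.1))) *
        toP p (col (φ s)) := by
    clear hws
    induction hw using Submodule.span_induction with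
    | mem x hx =>
      obtain ⟨γ, rfl⟩ := hx
      have := congrArg (toP p) (echelon_Z col S φ h3 γ)
      rw [map_mul, map_sum, hCC] at this
      simp only
      rw [this]
      refine Finset.sum_congr rfl fun s _ => ?_
      rw [map_mul, hCC]
      simp [cf_toP]
    | zero => simp [cf_zero]
    | add x y _ _ hx hy =>
      rw [mul_add, hx, hy, ← Finset.sum_add_distrib]
      refine Finset.sum_congr rfl fun s _ => ?_
      rw [← add_mul, ← C_add, ← C_add, ← Finset.sum_add_distrib]
      simp only [cf_add, mul_add]
    | smul a x _ hx =>
      rw [← CC_smul, mul_left_comm, hx, Finset.mul_sum]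
      refine Finset.sum_congr rfl fun s _ => ?_
      rw [← mul_assoc, ← C_mul, ← C_mul, Finset.mul_sum]
      simp only [cf_CC, mul_left_comm]
  have h0 : C (C ((selMat col S φ).det : ZMod p)) * w = 0 := by
    rw [key]
    refine Finset.sum_eq_zero fun s _ => ?_
    rw [Finset.sum_eq_zero (fun s' _ => by rw [hws s'.1 s'.2, mul_zero])]
    simp
  rcases mul_eq_zero.1 h0 with h | h
  · exfalso
    rw [C_eq_zero, C_eq_zero, ZMod.intCast_zmod_eq_zero_iff_dvd] at h
    exact hp h
  · exact h

theorem sum_fin_of_degree_lt {R : Type*} [CommRing R] (q : Polynomial R) (n : ℕ)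
    (h : q.degree < (n : WithBot ℕ)) : q = ∑ x : Fin n, C (q.coeff x) * X ^ (x : ℕ) := by
  by_cases hq : q = 0
  · simp [hq]
  · rw [Fin.sum_univ_eq_sum_range (fun x => C (q.coeff x) * X ^ x)]
    exact as_sum_range_C_mul_X_pow' q ((natDegree_lt_iff_degree_lt hq).2 h)

theorem module_lemma {F : Type*} [Field F] {t : ℕ} (f : Fin t → Biv F) (dy : ℕ)
    (hydeg : ∀ i, (f i).natDegree ≤ dy) (i0 : Fin t) (c : F) (hc : c ≠ 0)
    (hlead : (f i0).coeff dy = C c) (v : Biv F) (hv : v ∈ Ideal.span (Set.range f))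
    (hvd : v.degree < ((2 * dy : ℕ) : WithBot ℕ)) :
    ∃ u : Fin t × Fin dy → Polynomial F, v = ∑ j, C (u j) * (X ^ (j.2 : ℕ) * f j.1) := by
  obtain ⟨a, ha⟩ := (Ideal.mem_span_range_iff_exists_fun).1 hv
  set F1 : Biv F := C (C c⁻¹) * f i0 with hF1
  have hm1 : F1.coeff dy = 1 := by
    rw [hF1, coeff_C_mul, hlead, ← C_mul, inv_mul_cancel₀ hc, C_1]
  have hm2 : F1.natDegree ≤ dy := by
    refine (natDegree_C_mul_le _ _).trans (hydeg i0)
  have hmon : F1.Monic := monic_of_natDegree_le_of_coeff_eq_one dy hm2 hm1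
  have hdeg : F1.degree = (dy : WithBot ℕ) := by
    have : F1.natDegree = dy := le_antisymm hm2 (le_natDegree_of_ne_zero (by rw [hm1]; simp))
    rw [degree_eq_natDegree hmon.ne_zero, this]
  set z : Biv F := ∑ i, (a i /ₘ F1) * f i with hz
  have hv2 : v = ∑ i, (a i %ₘ F1) * f i + F1 * z := by
    rw [← ha, hz, Finset.mul_sum, ← Finset.sum_add_distrib]
    refine Finset.sum_congr rfl fun i _ => ?_
    conv_lhs => rw [← modByMonic_add_div (a i) F1]
    ring
  have hz2 : z.degree < (dy : WithBot ℕ) := by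
    have h1 : (F1 * z).degree < ((2 * dy : ℕ) : WithBot ℕ) := by
      have : F1 * z = v - ∑ i, (a i %ₘ F1) * f i := by rw [hv2]; ring
      rw [this]
      refine (degree_sub_le _ _).trans_lt (max_lt hvd ?_)
      refine (degree_sum_le _ _).trans_lt ?_
      rw [Finset.sup_lt_iff (WithBot.bot_lt_coe _)]
      intro i _
      rw [degree_mul]
      have h1 := degree_modByMonic_lt (a i) hmon
      rw [hdeg] at h1
      have h2 : (f i).degree ≤ (dy : WithBot ℕ) := degree_le_of_natDegree_le (hydeg i)
      have : (((2 * dy : ℕ)) : WithBot ℕ) = (dy : WithBot ℕ) + dy := by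
        rw [two_mul]; rfl
      rw [this]
      calc _ ≤ (a i %ₘ F1).degree + dy := by gcongr
        _ < _ := WithBot.add_lt_add_right (WithBot.coe_ne_bot) h1
    rw [degree_mul, hdeg] at h1
    by_contra hcon
    push Not at hcon
    apply absurd h1
    push Not
    have : (((2 * dy : ℕ)) : WithBot ℕ) = (dy : WithBot ℕ) + dy := by
      rw [two_mul]; rfl
    rw [this]
    gcongr
  obtain ⟨b, hb⟩ : ∃ b : Fin t → Biv F,
      ∀ i, b i = (a i %ₘ F1) + if i = i0 then C (C c⁻¹) * z else 0 := ⟨_, fun _ => rfl⟩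
  have hbd : ∀ i, (b i).degree < (dy : WithBot ℕ) := by
    intro i
    rw [hb]
    refine (degree_add_le _ _).trans_lt (max_lt (hdeg ▸ degree_modByMonic_lt _ hmon) ?_)
    split_ifs
    · refine lt_of_le_of_lt ?_ hz2
      rw [degree_mul]
      calc _ ≤ 0 + z.degree := by gcongr; exact degree_C_le
        _ = _ := zero_add _
    · simp
  have hvb : v = ∑ i, b i * f i := by
    rw [hv2]
    have e : ∀ i, b i * f i = (a i %ₘ F1) * f i + if i = i0 then C (C c⁻¹) * z * f i else 0 := by
      intro i
      rw [hb]
      split_ifs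
      · exact add_mul _ _ _
      · rw [add_zero, add_zero]
    rw [Finset.sum_congr rfl fun i _ => e i, Finset.sum_add_distrib,
      Finset.sum_ite_eq' Finset.univ i0, if_pos (Finset.mem_univ _)]
    refine congrArg₂ _ rfl ?_
    rw [mul_right_comm]
  refine ⟨fun j => (b j.1).coeff j.2, ?_⟩
  rw [hvb, Fintype.sum_prod_type]
  refine Finset.sum_congr rfl fun i _ => ?_
  conv_lhs => rw [sum_fin_of_degree_lt (b i) dy (hbd i)]
  rw [Finset.sum_mul]
  simp only [mul_assoc]

/-- the columns -/
def colF {t : ℕ} (f : Fin t → Biv k) (dy K : ℕ) (γ : Fin t × Fin dy × Fin (K + 1)) : Biv k :=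
  X ^ (γ.2.1 : ℕ) * (C (X ^ (γ.2.2 : ℕ)) * f γ.1)

theorem colF_mem {F : Type*} [Field F] {t : ℕ} (f : Fin t → Biv F) (dy K : ℕ)
    (q : Polynomial F) (hq : q.natDegree ≤ K) (j : Fin t × Fin dy) :
    C q * (X ^ (j.2 : ℕ) * f j.1) ∈ colSpan (colF f dy K) := by
  have h1 : q.degree < ((K + 1 : ℕ) : WithBot ℕ) := by
    refine degree_le_natDegree.trans_lt ?_
    exact_mod_cast Nat.lt_succ_of_le hq
  rw [sum_fin_of_degree_lt q (K + 1) h1, map_sum, Finset.sum_mul]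
  refine Submodule.sum_mem _ fun l _ => ?_
  have : C (C (q.coeff l) * X ^ (l : ℕ)) * (X ^ (j.2 : ℕ) * f j.1) =
      q.coeff l • colF f dy K (j.1, j.2, l) := by
    rw [← CC_smul, colF, C_mul]; ring
  rw [this]
  exact Submodule.smul_mem _ _ (Submodule.subset_span ⟨_, rfl⟩)

theorem field_main {F : Type*} [Field F] {t : ℕ} (ht : 2 ≤ t) (f : Fin t → Biv F) (dy d : ℕ)
    (hdy : 1 ≤ dy)
    (hydeg : ∀ i, (f i).natDegree ≤ dy) (hcoef : ∀ i a, ((f i).coeff a).natDegree ≤ d)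
    (i0 : Fin t) (c : F) (hc : c ≠ 0)
    (hlead : (f i0).coeff dy = C c) (P : Polynomial F) (hP : P ≠ 0)
    (hPI : C P ∈ Ideal.span (Set.range f)) :
    ∃ Δ : Polynomial F, Δ ≠ 0 ∧ C Δ ∈ colSpan (colF f dy ((t * dy - 1) * d)) ∧
      ∀ v ∈ Ideal.span (Set.range f), v.degree < ((2 * dy : ℕ) : WithBot ℕ) →
        (∀ a, (v.coeff a).natDegree ≤ Δ.natDegree) →
        v ∈ colSpan (colF f dy ((t * dy - 1) * d)) := by
  classical
  obtain ⟨ε, hε1, hε2⟩ : ∃ ε : ℕ, (t ≠ 2 → d ≤ ε) ∧ (2 * dy - 1) * d + ε ≤ (t * dy - 1) * d := by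
    by_cases h2 : t = 2
    · exact ⟨0, fun h => absurd h2 h, by rw [h2]; simp⟩
    · refine ⟨d, fun _ => le_rfl, ?_⟩
      have h3 : 2 * dy - 1 + 1 ≤ t * dy - 1 := by
        have : 3 * dy ≤ t * dy := Nat.mul_le_mul_right _ (by omega)
        omega
      calc (2 * dy - 1) * d + d = (2 * dy - 1 + 1) * d := by ring
        _ ≤ _ := Nat.mul_le_mul_right _ h3
  let B : Fin t × Fin dy → Biv F := fun j => X ^ (j.2 : ℕ) * f j.1
  have hBdeg : ∀ j, (B j).degree < ((2 * dy : ℕ) : WithBot ℕ) := by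
    intro j
    refine degree_le_natDegree.trans_lt ?_
    have h1 : (B j).natDegree ≤ j.2 + dy :=
      natDegree_mul_le.trans (add_le_add (natDegree_X_pow_le _) (hydeg _))
    have := j.2.2
    exact_mod_cast (by omega : (B j).natDegree < 2 * dy)
  have hBc : ∀ j r, ((B j).coeff r).natDegree ≤ d := by
    intro j r
    simp only [B, coeff_X_pow_mul']
    split_ifs
    · exact hcoef _ _
    · simp
  let A : Matrix (Fin (2 * dy)) (Fin t × Fin dy) (Polynomial F) := Matrix.of fun r j => (B j).coeff r
  have hext : ∀ v w : Biv F, v.degree < ((2 * dy : ℕ) : WithBot ℕ) →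
      w.degree < ((2 * dy : ℕ) : WithBot ℕ) → (∀ r : Fin (2 * dy), v.coeff r = w.coeff r) → v = w := by
    intro v w hv hw h
    rw [sum_fin_of_degree_lt v _ hv, sum_fin_of_degree_lt w _ hw]
    simp only [h]
  have hsumdeg : ∀ {ι : Type} [Fintype ι] (g : ι → Biv F),
      (∀ i, (g i).degree < ((2 * dy : ℕ) : WithBot ℕ)) →
      (∑ i, g i).degree < ((2 * dy : ℕ) : WithBot ℕ) := by
    intro ι _ g hg
    refine (degree_sum_le _ _).trans_lt ?_
    rw [Finset.sup_lt_iff (WithBot.bot_lt_coe _)]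
    intro i _
    exact hg i
  have hCdeg : ∀ (q : Polynomial F) (w : Biv F), w.degree < ((2 * dy : ℕ) : WithBot ℕ) →
      (C q * w).degree < ((2 * dy : ℕ) : WithBot ℕ) := by
    intro q w hw
    refine lt_of_le_of_lt ?_ hw
    rw [degree_mul]
    calc _ ≤ 0 + w.degree := by gcongr; exact degree_C_le
      _ = _ := zero_add _
  have hU : ∀ r : Fin (2 * dy), ∃ u : Fin t × Fin dy → Polynomial F,
      C P * X ^ (r : ℕ) = ∑ j, C (u j) * B j := by
    intro r
    refine module_lemma f dy hydeg i0 c hc hlead _ (Ideal.mul_mem_right _ _ hPI) ?_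
    apply hCdeg
    rw [degree_X_pow]
    exact_mod_cast r.2
  choose u hu using hU
  let U : Matrix (Fin t × Fin dy) (Fin (2 * dy)) (Polynomial F) := Matrix.of fun j r => u r j
  have hAU : A * U = P • (1 : Matrix (Fin (2 * dy)) (Fin (2 * dy)) (Polynomial F)) := by
    ext1 r' r
    have := congrArg (fun q => q.coeff (r' : ℕ)) (hu r)
    simp only [coeff_C_mul, coeff_X_pow, finsetSum_coeff] at this
    rw [Matrix.mul_apply, Matrix.smul_apply, Matrix.one_apply, smul_eq_mul]
    simp only [A, U, Matrix.of_apply, ← Fin.ext_iff] at this ⊢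
    rw [this]
    exact Finset.sum_congr rfl fun j _ => mul_comm _ _
  obtain ⟨φ, hφ⟩ := det_select A U (by
    rw [hAU, Matrix.det_smul, Matrix.det_one, mul_one]
    exact pow_ne_zero _ hP)
  have hinj := select_inj A φ hφ
  obtain ⟨A', hA'⟩ : ∃ A', A' = A.submatrix id φ := ⟨_, rfl⟩
  have hA'e : ∀ r s, A' r s = (B (φ s)).coeff r := by intro r s; rw [hA']; rfl
  rw [← hA'] at hφ
  have hadj : ∀ r s, (A'.adjugate r s).natDegree ≤ (2 * dy - 1) * d := by
    intro r s
    have := natDegree_adj_le A' d (by intro i j; rw [hA'e]; exact hBc _ _) r s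
    simpa using this
  have hcomb : ∀ v : Biv F, v.degree < ((2 * dy : ℕ) : WithBot ℕ) →
      C A'.det * v = ∑ r, C (∑ s, A'.adjugate r s * v.coeff (s : ℕ)) * B (φ r) := by
    intro v hv
    apply hext _ _ (hCdeg _ _ hv) (hsumdeg _ fun r => hCdeg _ _ (hBdeg _))
    intro r
    rw [coeff_C_mul, finsetSum_coeff]
    simp only [coeff_C_mul, ← hA'e]
    have := congrFun (congrArg (fun M => M.mulVec (fun s : Fin (2 * dy) => v.coeff (s : ℕ)))
      (Matrix.mul_adjugate A')) r
    simp only [Matrix.smul_mulVec, Matrix.one_mulVec, ← Matrix.mulVec_mulVec] at this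
    simp only [Pi.smul_apply, smul_eq_mul] at this
    rw [← this]
    simp only [Matrix.mulVec, dotProduct]
    exact Finset.sum_congr rfl fun j _ => mul_comm _ _
  refine ⟨A'.det, hφ, ?_, ?_⟩
  · have h1 := hcomb 1 (by
      rw [degree_one]
      exact_mod_cast (by omega : 0 < 2 * dy))
    rw [mul_one] at h1
    rw [h1]
    refine Submodule.sum_mem _ fun r _ => colF_mem f dy _ _ ?_ (φ r)
    refine natDegree_sum_le_of_forall_le _ _ fun s _ => ?_
    rw [coeff_one]
    split_ifs
    · rw [mul_one]; exact (hadj _ _).trans (by omega)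
    · simp
  · intro v hvI hvd hvc
    obtain ⟨u, hu⟩ := module_lemma f dy hydeg i0 c hc hlead v hvI hvd
    change v = ∑ j, C (u j) * B j at hu
    obtain ⟨rem, hrem1, hrem2⟩ : ∃ rem : Fin t × Fin dy → Polynomial F,
        (∀ j, (rem j * 1).natDegree ≤ A'.det.natDegree ∧ (t = 2 → rem j = 0)) ∧
        (∀ j, (∃ r, φ r = j) ∨ ∃ q, u j - rem j = A'.det * q) := by
      refine ⟨fun j => if ∃ r, φ r = j then 0 else u j % A'.det, ?_, ?_⟩
      · intro j
        constructor
        · beta_reduce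
          split_ifs
          · simp
          · rw [mul_one]
            exact natDegree_le_natDegree (degree_mod_lt _ hφ).le
        · intro h2
          beta_reduce
          rw [if_pos]
          have hcard : Fintype.card (Fin (2 * dy)) = Fintype.card (Fin t × Fin dy) := by
            simp [h2]
          exact ((Fintype.bijective_iff_injective_and_card φ).2 ⟨hinj, hcard⟩).2 j
      · intro j
        by_cases h : ∃ r, φ r = j
        · exact Or.inl h
        · right
          refine ⟨u j / A'.det, ?_⟩
          simp only [if_neg h]
          have := EuclideanDomain.div_add_mod (u j) A'.det
          linear_combination -this
    obtain ⟨v', hv'⟩ : ∃ v', v' = v - ∑ j, C (rem j) * B j := ⟨_, rfl⟩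
    have hv'span : v' ∈ Submodule.span (Polynomial F) (Set.range fun r => B (φ r)) := by
      have : v' = ∑ j, C (u j - rem j) * B j := by
        rw [hv']
        conv_lhs => rw [hu]
        rw [← Finset.sum_sub_distrib]
        refine Finset.sum_congr rfl fun j _ => ?_
        rw [C_sub, sub_mul]
      rw [this]
      refine Submodule.sum_mem _ fun j _ => ?_
      rcases hrem2 j with ⟨r, rfl⟩ | ⟨q, hq⟩
      · rw [← smul_eq_C_mul]
        exact Submodule.smul_mem _ _ (Submodule.subset_span ⟨r, rfl⟩)
      · rw [hq, mul_comm A'.det q, C_mul, mul_assoc, hcomb _ (hBdeg j), ← smul_eq_C_mul]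
        refine Submodule.smul_mem _ _ (Submodule.sum_mem _ fun r _ => ?_)
        rw [← smul_eq_C_mul]
        exact Submodule.smul_mem _ _ (Submodule.subset_span ⟨r, rfl⟩)
    obtain ⟨y, hy⟩ := (Submodule.mem_span_range_iff_exists_fun (Polynomial F)).1 hv'span
    have hv'c : ∀ a, (v'.coeff a).natDegree ≤ A'.det.natDegree + ε := by
      intro a
      rw [hv', coeff_sub, finsetSum_coeff]
      refine (natDegree_sub_le _ _).trans (max_le ((hvc a).trans (Nat.le_add_right _ _)) ?_)
      refine natDegree_sum_le_of_forall_le _ _ fun j _ => ?_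
      rw [coeff_C_mul]
      by_cases h2 : t = 2
      · rw [(hrem1 j).2 h2]; simp
      · have h3 := (hrem1 j).1
        rw [mul_one] at h3
        exact natDegree_mul_le.trans (add_le_add h3 ((hBc j a).trans (hε1 h2)))
    have hyΔ : ∀ r, A'.det * y r = ∑ s, A'.adjugate r s * v'.coeff (s : ℕ) := by
      intro r
      have h1 : (fun s : Fin (2 * dy) => v'.coeff (s : ℕ)) = A'.mulVec y := by
        ext1 s
        rw [← hy, finsetSum_coeff]
        simp only [Matrix.mulVec, dotProduct, hA'e, coeff_smul, smul_eq_mul]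
        exact Finset.sum_congr rfl fun j _ => mul_comm _ _
      have h2 := congrFun (congrArg (fun w => A'.adjugate.mulVec w) h1) r
      simp only [Matrix.mulVec_mulVec, Matrix.adjugate_mul, Matrix.smul_mulVec,
        Matrix.one_mulVec] at h2
      simp only [Pi.smul_apply, smul_eq_mul] at h2
      rw [← h2]
      rfl
    have hyd : ∀ r, (y r).natDegree ≤ (t * dy - 1) * d := by
      intro r
      by_cases hy0 : y r = 0
      · rw [hy0]; simp
      have h1 : (A'.det * y r).natDegree ≤ (2 * dy - 1) * d + (A'.det.natDegree + ε) := by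
        rw [hyΔ]
        refine natDegree_sum_le_of_forall_le _ _ fun s _ => ?_
        exact natDegree_mul_le.trans (add_le_add (hadj _ _) (hv'c _))
      rw [natDegree_mul hφ hy0] at h1
      omega
    have hremd : ∀ j, (rem j).natDegree ≤ (t * dy - 1) * d := by
      intro j
      by_cases h2 : t = 2
      · rw [(hrem1 j).2 h2]; simp
      · have h3 := (hrem1 j).1
        rw [mul_one] at h3
        have h4 : A'.det.natDegree ≤ ∑ _i : Fin (2 * dy), d :=
          natDegree_det_le' A' _ (by intro i j; rw [hA'e]; exact hBc _ _)
        simp only [Finset.sum_const, Finset.card_univ, Fintype.card_fin, smul_eq_mul] at h4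
        have h5 := hε1 h2
        have h6 : 2 * dy * d = (2 * dy - 1) * d + d := by
          obtain ⟨n, hn⟩ : ∃ n, 2 * dy = n + 1 := ⟨2 * dy - 1, by omega⟩
          rw [hn]; simp; ring
        omega
    have hfin : v = ∑ r, C (y r) * B (φ r) + ∑ j, C (rem j) * B j := by
      have : ∑ r, C (y r) * B (φ r) = v' := by
        rw [← hy]; simp only [smul_eq_C_mul]
      rw [this, hv']; ring
    rw [hfin]
    refine Submodule.add_mem _ (Submodule.sum_mem _ fun r _ => ?_) (Submodule.sum_mem _ fun j _ => ?_)
    · exact colF_mem f dy _ _ (hyd r) (φ r)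
    · exact colF_mem f dy _ _ (hremd j) j

theorem gb_uniq {F : Type*} [Field F] {s : ℕ} {g : Fin (s + 1) → Biv F} {I : Ideal (Biv F)}
    (hg : IsReducedGB g I) {l j : Fin (s + 1)} {m : ℕ × ℕ} (h1 : monDvd (lmon (g l)) m)
    (h2 : cf (g j) m ≠ 0) : j = l := by
  by_contra h
  exact hg.2.2.1 j l h m h2 h1

theorem gb_cover {F : Type*} [Field F] {s : ℕ} {g : Fin (s + 1) → Biv F} {I : Ideal (Biv F)}
    (hg : IsReducedGB g I) (f : Biv F) (hf : f ∈ I) (h0 : f ≠ 0) :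
    ∃ j, monDvd (lmon (g j)) (lmon f) := by
  obtain ⟨q, hq, h⟩ := hg.1.2 f hf h0
  rw [List.mem_ofFn] at hq
  obtain ⟨j, rfl⟩ := hq
  exact ⟨j, h⟩

theorem gb_mem {F : Type*} [Field F] {s : ℕ} {g : Fin (s + 1) → Biv F} {I : Ideal (Biv F)}
    (hg : IsReducedGB g I) (j) : g j ≠ 0 ∧ g j ∈ I :=
  hg.1.1 _ ((List.mem_ofFn).2 ⟨j, rfl⟩)

theorem gb_bounds {F : Type*} [Field F] {s : ℕ} {g : Fin (s + 1) → Biv F} {I : Ideal (Biv F)}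
    (hg : IsReducedGB g I) (dy : ℕ) (j0 j1 : Fin (s + 1)) (h0 : monDvd (lmon (g j0)) (dy, 0))
    (h1 : (lmon (g j1)).1 = 0) (j) (m : ℕ × ℕ) (hm : cf (g j) m ≠ 0) :
    m.1 ≤ dy ∧ m.2 ≤ (lmon (g j1)).2 := by
  have e : ∀ l, monDvd (lmon (g l)) m → j = l := fun l h => gb_uniq hg h hm
  have hle := cf_le _ _ hm
  have e0 := e j0
  have e1 := e j1
  unfold monDvd at *
  unfold monLt at hle
  rw [Prod.ext_iff] at hle
  simp only at h0
  constructor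
  · by_contra hc
    obtain rfl := e0 (by omega)
    omega
  · by_contra hc
    obtain rfl := e1 (by omega)
    omega

theorem elim_exists (I : Ideal (Biv ℚ)) (hdim : FiniteDimensional ℚ (Biv ℚ ⧸ I)) :
    ∃ P : Polynomial ℚ, P ≠ 0 ∧ C P ∈ I := by
  have hint : IsIntegral ℚ (Ideal.Quotient.mk I (C X)) := Algebra.IsIntegral.isIntegral _
  obtain ⟨P, hP, h⟩ := hint
  refine ⟨P, hP.ne_zero, ?_⟩
  rw [← Ideal.Quotient.eq_zero_iff_mem, ← h]
  have : eval₂ (algebraMap ℚ (Biv ℚ ⧸ I)) (Ideal.Quotient.mk I (C X)) P =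
      (Ideal.Quotient.mk I) ((C : Polynomial ℚ →+* _) P) := by
    conv_rhs => rw [← eval₂_C_X (p := P), hom_eval₂, hom_eval₂]
    rfl
  rw [this]

theorem lmon_C {F : Type*} [Field F] (P : Polynomial F) : lmon (C P : Biv F) = (0, P.natDegree) := by
  simp [lmon]

theorem natDegree_coeff_le {q : Biv k} {d : ℕ} (h : totDeg q ≤ d) (a : ℕ) :
    (q.coeff a).natDegree ≤ d := by
  by_cases ha : q.coeff a = 0
  · simp [ha]
  · have := Finset.le_sup (f := fun j => j + (q.coeff j).natDegree) (mem_support_iff.2 ha)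
    unfold totDeg at h
    omega

theorem toQ_colF {t : ℕ} (f : Fin t → Biv ℤ) (dy K : ℕ) :
    (fun γ => toQ (colF f dy K γ)) = colF (fun i => toQ (f i)) dy K := by
  ext1 γ
  simp [colF, toQ]

theorem toP_colF (p : ℕ) {t : ℕ} (f : Fin t → Biv ℤ) (dy K : ℕ) :
    (fun γ => toP p (colF f dy K γ)) = colF (fun i => toP p (f i)) dy K := by
  ext1 γ
  simp [colF, toP]

theorem colSpan_le {F : Type*} [Field F] {t : ℕ} (f : Fin t → Biv F) (dy K : ℕ) (w : Biv F)
    (hw : w ∈ colSpan (colF f dy K)) : w ∈ Ideal.span (Set.range f) := by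
  induction hw using Submodule.span_induction with
  | mem x hx =>
    obtain ⟨γ, rfl⟩ := hx
    exact Ideal.mul_mem_left _ _ (Ideal.mul_mem_left _ _ (Ideal.subset_span ⟨_, rfl⟩))
  | zero => exact Ideal.zero_mem _
  | add x y _ _ hx hy => exact Ideal.add_mem _ hx hy
  | smul a x _ hx =>
    rw [← CC_smul]
    exact Ideal.mul_mem_left _ _ hx

theorem det_bound {m : Type*} [Fintype m] [DecidableEq m] (M : Matrix m m ℤ) (H : ℝ)
    (hM : ∀ i j, ((|M i j| : ℤ) : ℝ) ≤ H) :
    ((|M.det| : ℤ) : ℝ) ≤ (Fintype.card m).factorial * H ^ Fintype.card m := by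
  rw [Matrix.det_apply]
  have h1 : |∑ σ : Equiv.Perm m, Equiv.Perm.sign σ • ∏ i, M (σ i) i| ≤
      ∑ σ : Equiv.Perm m, ∏ i, |M (σ i) i| := by
    refine (Finset.abs_sum_le_sum_abs _ _).trans (Finset.sum_le_sum fun σ _ => ?_)
    rw [← Finset.abs_prod]
    rcases Int.units_eq_one_or (Equiv.Perm.sign σ) with h | h <;> rw [h] <;> simp
  have h2 : ((∑ σ : Equiv.Perm m, ∏ i, |M (σ i) i| : ℤ) : ℝ) ≤
      ∑ σ : Equiv.Perm m, H ^ Fintype.card m := by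
    push_cast
    refine Finset.sum_le_sum fun σ _ => ?_
    calc ∏ i, |(M (σ i) i : ℝ)| ≤ ∏ i : m, H := by
          refine Finset.prod_le_prod (fun i _ => abs_nonneg _) fun i _ => ?_
          exact_mod_cast hM (σ i) i
      _ = _ := by simp
  calc _ ≤ ((∑ σ : Equiv.Perm m, ∏ i, |M (σ i) i| : ℤ) : ℝ) := by exact_mod_cast h1
    _ ≤ _ := h2
    _ = _ := by simp [Fintype.card_perm]

theorem num_bound (t d dy r : ℕ) (h : ℝ) (hh : 0 ≤ h) (hn : 1 ≤ t * dy)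
    (hr : r ≤ t * dy * ((t * dy - 1) * d + 1)) :
    Real.exp h * (r.factorial * Real.exp h ^ r) ≤ Real.exp (Cfun t d (Delta1 dy) h) := by
  have hN : (t * dy) ^ 2 * d - t * dy * d + t * dy = t * dy * ((t * dy - 1) * d + 1) := by
    generalize t * dy = n at *
    obtain ⟨q, rfl⟩ : ∃ q, n = q + 1 := ⟨n - 1, by omega⟩
    have : (q + 1) ^ 2 * d = (q + 1) * q * d + (q + 1) * d := by ring
    rw [this, Nat.add_sub_cancel, Nat.add_sub_cancel]; ring
  unfold Cfun Bfun Delta1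
  rw [hN]
  set N := t * dy * ((t * dy - 1) * d + 1) with hNd
  have hN1 : 1 ≤ N := Nat.mul_pos hn (by omega)
  have hNr : (1 : ℝ) ≤ N := by exact_mod_cast hN1
  have hfac : (r.factorial : ℝ) ≤ Real.exp (N * Real.log N) := by
    have h1 : r.factorial ≤ N ^ N := (Nat.factorial_le hr).trans (Nat.factorial_le_pow N)
    calc (r.factorial : ℝ) ≤ ((N ^ N : ℕ) : ℝ) := by exact_mod_cast h1
      _ = Real.exp (N * Real.log N) := by
        rw [mul_comm, Real.exp_mul, Real.exp_log (by linarith)]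
        simp
  have hpow : Real.exp h ^ r ≤ Real.exp (N * h) := by
    rw [← Real.exp_nat_mul]
    apply Real.exp_le_exp.2
    gcongr
  have hl : 0 ≤ Real.log (((t * dy : ℕ) : ℝ) * ((d : ℝ) + 1)) := by
    apply Real.log_nonneg
    have h1 : (1 : ℝ) ≤ ((t * dy : ℕ) : ℝ) := by exact_mod_cast hn
    have h2 : (0 : ℝ) ≤ d := Nat.cast_nonneg _
    nlinarith
  have hl2 : 0 ≤ Real.log 2 := Real.log_nonneg (by norm_num)
  calc _ ≤ Real.exp h * (Real.exp (N * Real.log N) * Real.exp (N * h)) := by gcongr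
    _ = Real.exp (h + (N * Real.log N + N * h)) := by rw [Real.exp_add, Real.exp_add]
    _ ≤ _ := by
      apply Real.exp_le_exp.2
      linarith

theorem redP (p : ℕ) [Fact p.Prime] (β : ℤ) (hβ : ¬ (p : ℤ) ∣ β) (g : Biv ℚ) (gz : Biv ℤ)
    (h : toQ gz = C (C (β : ℚ)) * g) (hg : lexMonic g) :
    (∀ m, cf (C (C ((β : ZMod p))⁻¹) * toP p gz) m ≠ 0 → cf g m ≠ 0) ∧
    lmon (C (C ((β : ZMod p))⁻¹) * toP p gz) = lmon g ∧
    lexMonic (C (C ((β : ZMod p))⁻¹) * toP p gz) := by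
  have hβ0 : (β : ZMod p) ≠ 0 := by
    rw [Ne, ZMod.intCast_zmod_eq_zero_iff_dvd]; exact hβ
  have hc : ∀ m, ((cf gz m : ℤ) : ℚ) = β * cf g m := by
    intro m; rw [← cf_toQ, h, cf_CC]
  have hc2 : ∀ m, cf (C (C ((β : ZMod p))⁻¹) * toP p gz) m = (β : ZMod p)⁻¹ * ((cf gz m : ℤ) : ZMod p) := by
    intro m; rw [cf_CC, cf_toP]
  have h1 : ∀ m, cf (C (C ((β : ZMod p))⁻¹) * toP p gz) m ≠ 0 → cf g m ≠ 0 := by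
    intro m hm h0
    apply hm
    have := hc m
    rw [h0, mul_zero, Int.cast_eq_zero] at this
    rw [hc2, this]; simp
  have h2 : cf (C (C ((β : ZMod p))⁻¹) * toP p gz) (lmon g) = 1 := by
    have := hc (lmon g)
    have hg' : cf g (lmon g) = 1 := hg
    rw [hg', mul_one, Int.cast_inj] at this
    rw [hc2, this, inv_mul_cancel₀ hβ0]
  have h3 : lmon (C (C ((β : ZMod p))⁻¹) * toP p gz) = lmon g :=
    lmon_of (by rw [h2]; exact one_ne_zero) fun m hm => cf_le g m (h1 m hm)
  refine ⟨h1, h3, ?_⟩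
  rw [← h3, cf_lmon] at h2
  exact h2

theorem deg_of_cf {F : Type*} [Field F] (v : Biv F) (dy M : ℕ) (hdy : 1 ≤ dy)
    (hv : ∀ m, cf v m ≠ 0 → m.1 ≤ dy ∧ m.2 ≤ M) :
    v.degree < ((2 * dy : ℕ) : WithBot ℕ) ∧ ∀ a, (v.coeff a).natDegree ≤ M := by
  constructor
  · rw [degree_lt_iff_coeff_zero]
    intro a ha
    ext b
    by_contra h
    have := (hv (a, b) (by simpa [cf] using h)).1
    simp only at this
    omega
  · intro a
    rw [natDegree_le_iff_coeff_eq_zero]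
    intro b hb
    by_contra h
    have := (hv (a, b) h).2
    simp only at this
    omega

theorem cf_col_bound {t : ℕ} (f : Fin t → Biv ℤ) (dy K : ℕ) (H : ℝ) (hH : 0 ≤ H)
    (hht : ∀ i (a b : ℕ), ((|((f i).coeff a).coeff b| : ℤ) : ℝ) ≤ H) (γ) (m) :
    ((|cf (colF f dy K γ) m| : ℤ) : ℝ) ≤ H := by
  rw [colF, cf_shift]
  split_ifs
  · exact hht _ _ _
  · simpa using hH

theorem lmon_f {F : Type*} [Field F] (q : Biv F) (dy : ℕ) (c : F) (hc : c ≠ 0)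
    (h1 : q.natDegree ≤ dy) (h2 : q.coeff dy = C c) : q ≠ 0 ∧ lmon q = (dy, 0) := by
  have h3 : cf q (dy, 0) ≠ 0 := by simp [cf, h2, hc]
  refine ⟨by rintro rfl; exact h3 (cf_zero _), lmon_of h3 ?_⟩
  rintro ⟨a, b⟩ hm
  have ha : a ≤ dy := by
    by_contra h
    apply hm
    simp [cf, coeff_eq_zero_of_natDegree_lt (show q.natDegree < a by omega)]
  unfold monLt
  simp only [Prod.mk.injEq]
  rcases ha.lt_or_eq with h | rfl
  · exact Or.inr (Or.inl h)
  · left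
    refine ⟨rfl, ?_⟩
    by_contra hb
    apply hm
    simp [cf, h2, coeff_C, hb]

theorem main_pos {t s : ℕ} (ht : 2 ≤ t)
    (f : Fin t → Biv ℤ) (dy d : ℕ) (hdy : 1 ≤ dy) (h : ℝ)
    (hydeg : ∀ i, (f i).natDegree ≤ dy)
    (htot : ∀ i, totDeg (f i) ≤ d)
    (hht : ∀ i (a b : ℕ), ((|((f i).coeff a).coeff b| : ℤ) : ℝ) ≤ Real.exp h)
    (i0 : Fin t) (c : ℤ) (hc : c ≠ 0) (hlead : (f i0).coeff dy = Polynomial.C c)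
    (hcH : ((|c| : ℤ) : ℝ) ≤ Real.exp h) (hh : 0 ≤ h)
    (I : Ideal (Biv ℚ)) (hI : I = Ideal.span (Set.range fun i => toQ (f i)))
    (hdim : FiniteDimensional ℚ (Biv ℚ ⧸ I))
    (g : Fin (s + 1) → Biv ℚ) (hg : IsReducedGB g I) :
    ∃ β : ℤ, β ≠ 0 ∧
      ∃ gz : Fin (s + 1) → Biv ℤ,
        (∀ j, toQ (gz j) = Polynomial.C (Polynomial.C (β : ℚ)) * g j) ∧
        ((|β| : ℝ) ≤ Real.exp (Cfun t d (Delta1 dy) h)) ∧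
        (∀ j (a b : ℕ), ((|((gz j).coeff a).coeff b| : ℤ) : ℝ) ≤
          Real.exp (Cfun t d (Delta1 dy) h)) ∧
        (∀ p : ℕ, p.Prime → ¬ ((p : ℤ) ∣ β) →
          IsReducedGB
            (fun j => Polynomial.C (Polynomial.C ((β : ZMod p))⁻¹) * toP p (gz j))
            (Ideal.span (Set.range fun i => toP p (f i)))) := by
  classical
  set K := (t * dy - 1) * d with hK
  obtain ⟨S, φ, hdet, hinj, hSW, h3, h5⟩ := echelon (colF f dy K)
  have h3' := h3
  rw [toQ_colF] at hSW h3' h5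
  obtain ⟨P, hP0, hPI⟩ := elim_exists I hdim
  have hyQ : ∀ i, (toQ (f i)).natDegree ≤ dy := fun i => natDegree_map_le.trans (hydeg i)
  have hcQ : ∀ i a, ((toQ (f i)).coeff a).natDegree ≤ d := fun i a => by
    simp only [toQ, coe_mapRingHom, coeff_map]
    exact natDegree_map_le.trans (natDegree_coeff_le (htot i) a)
  have hlQ : (toQ (f i0)).coeff dy = C (c : ℚ) := by simp [toQ, hlead]
  have hc0 : (c : ℚ) ≠ 0 := by exact_mod_cast hc
  obtain ⟨Δ, hΔ0, hΔW, hW⟩ := field_main ht (fun i => toQ (f i)) dy d hdy hyQ hcQ i0 (c : ℚ) hc0 hlQ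
    P hP0 (hI ▸ hPI)
  rw [← hK] at hΔW hW
  have hWI : ∀ w ∈ colSpan (colF (fun i => toQ (f i)) dy K), w ∈ I := fun w hw => by
    rw [hI]; exact colSpan_le _ _ _ _ hw
  -- structure of the Gröbner basis
  obtain ⟨j0, hj0⟩ : ∃ j0, monDvd (lmon (g j0)) (dy, 0) := by
    obtain ⟨e1, e2⟩ := lmon_f _ dy _ hc0 (hyQ i0) hlQ
    rw [← e2]
    exact gb_cover hg _ (by rw [hI]; exact Ideal.subset_span ⟨i0, rfl⟩) e1
  obtain ⟨j1, hj1⟩ : ∃ j1, (lmon (g j1)).1 = 0 := by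
    obtain ⟨j1, e⟩ := gb_cover hg _ hPI (by simpa using hP0)
    rw [lmon_C] at e
    exact ⟨j1, Nat.le_zero.1 e.1⟩
  set M := (lmon (g j1)).2 with hM
  have hmin : ∀ j, (lmon (g j)).1 = 0 → M ≤ (lmon (g j)).2 := by
    intro j hj
    by_contra hcon
    have : monDvd (lmon (g j)) (lmon (g j1)) := ⟨by omega, by omega⟩
    have := gb_uniq hg this (cf_lmon_ne _ (gb_mem hg j1).1)
    subst this
    exact hcon le_rfl
  have hbd := gb_bounds hg dy j0 j1 hj0 hj1
  have hMΔ : M ≤ Δ.natDegree := by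
    obtain ⟨j, e⟩ := gb_cover hg (C Δ) (hWI _ hΔW) (by simpa using hΔ0)
    rw [lmon_C] at e
    exact (hmin j (Nat.le_zero.1 e.1)).trans e.2
  have hgW : ∀ j, g j ∈ colSpan (colF (fun i => toQ (f i)) dy K) := by
    intro j
    obtain ⟨e1, e2⟩ := deg_of_cf (g j) dy M hdy (hbd j)
    exact hW _ (hI ▸ (gb_mem hg j).2) e1 fun a => (e2 a).trans hMΔ
  have hSI : ∀ s ∈ S, ∃ j, monDvd (lmon (g j)) (ofLex s) := by
    intro s hs
    obtain ⟨w, hw, hw0, hws⟩ := hSW s hs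
    rw [← hws]
    exact gb_cover hg w (hWI w hw) hw0
  let lam : Fin (s + 1) → S := fun j => ⟨toLex (lmon (g j)), h5 _ (hgW j) (gb_mem hg j).1⟩
  have hcfg : ∀ j (s' : S), cf (g j) (ofLex s'.1) = if s' = lam j then 1 else 0 := by
    intro j s'
    split_ifs with e
    · rw [e]; exact hg.2.1 j
    · by_contra hne
      obtain ⟨l, hl⟩ := hSI s'.1 s'.2
      have := gb_uniq hg hl hne
      subst this
      apply e
      have hle := cf_le _ _ hne
      apply Subtype.ext
      change s'.1 = toLex (lmon (g j))
      apply ofLex.injective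
      change ofLex s'.1 = lmon (g j)
      unfold monDvd at hl
      unfold monLt at hle
      rw [Prod.ext_iff] at *
      omega
  let Pm := selMat (colF f dy K) S φ
  let gz' : Fin (s + 1) → Biv ℤ := fun j => ∑ s, C (C (Pm.adjugate s (lam j))) * colF f dy K (φ s)
  have hCCQ : ∀ z : ℤ, toQ (C (C z)) = C (C (z : ℚ)) := by intro z; simp [toQ]
  have hgz' : ∀ j, toQ (gz' j) = C (C ((Pm.det : ℤ) : ℚ)) * g j := by
    intro j
    rw [echelon_Q (colF f dy K) S φ h3 (g j) (by rw [toQ_colF]; exact hgW j), map_sum]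
    refine Finset.sum_congr rfl fun s _ => ?_
    rw [map_mul, hCCQ]
    simp only [hcfg]
    simp [Pm]
  have hcard : Fintype.card S ≤ t * dy * ((t * dy - 1) * d + 1) := by
    have := Fintype.card_le_of_injective φ hinj
    simp only [Fintype.card_prod, Fintype.card_fin] at this
    rw [← mul_assoc, hK] at this
    exact this
  have hnum := num_bound t d dy (Fintype.card S) h hh
    (Nat.mul_pos (by omega) hdy) hcard
  have hPmb : ∀ a b, ((|Pm a b| : ℤ) : ℝ) ≤ Real.exp h := fun a b =>
    cf_col_bound f dy K _ (Real.exp_pos _).le hht _ _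
  have hgzb : ∀ j m, ((|cf (gz' j) m| : ℤ) : ℝ) ≤
      (Fintype.card S).factorial * Real.exp h ^ Fintype.card S := by
    intro j m
    have e : cf (gz' j) m =
        (Pm.transpose.updateCol (lam j) (fun s => cf (colF f dy K (φ s)) m)).det := by
      rw [← Matrix.cramer_apply, Matrix.cramer_eq_adjugate_mulVec, ← Matrix.adjugate_transpose]
      simp only [gz', cf_sum, cf_CC]
      rfl
    rw [e]
    apply det_bound
    intro a b
    rw [Matrix.updateCol_apply]
    split_ifs
    · exact cf_col_bound f dy K _ (Real.exp_pos _).le hht _ _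
    · exact hPmb _ _
  have hmain1 : ∀ j, toQ (C (C c) * gz' j) = C (C ((c * Pm.det : ℤ) : ℚ)) * g j := by
    intro j
    rw [map_mul, hgz', hCCQ, ← mul_assoc, ← C_mul, ← C_mul]
    push_cast
    rfl
  refine ⟨c * Pm.det, mul_ne_zero hc hdet, fun j => C (C c) * gz' j, hmain1, ?_, ?_, ?_⟩
  · refine le_trans ?_ hnum
    have := det_bound Pm _ hPmb
    push_cast at this hcH ⊢
    rw [abs_mul]
    gcongr
  · intro j a b
    refine le_trans ?_ hnum
    have := hgzb j (a, b)
    have e : ((C (C c) * gz' j).coeff a).coeff b = c * cf (gz' j) (a, b) := cf_CC _ _ (a, b)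
    rw [e, abs_mul]
    push_cast at this hcH ⊢
    gcongr
  · intro p hp hpβ
    have : Fact p.Prime := ⟨hp⟩
    have hpc : ¬ (p : ℤ) ∣ c := fun e => hpβ (e.mul_right _)
    have hpd : ¬ (p : ℤ) ∣ Pm.det := fun e => hpβ (e.mul_left _)
    set J := Ideal.span (Set.range fun i => toP p (f i)) with hJ
    have hred := fun j => redP p (c * Pm.det) hpβ (g j) (C (C c) * gz' j) (hmain1 j) (hg.2.1 j)
    set G : Fin (s + 1) → Biv (ZMod p) := fun j =>
      C (C (((c * Pm.det : ℤ) : ZMod p))⁻¹) * toP p (C (C c) * gz' j) with hG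
    have hr1 : ∀ j m, cf (G j) m ≠ 0 → cf (g j) m ≠ 0 := fun j => (hred j).1
    have hr2 : ∀ j, lmon (G j) = lmon (g j) := fun j => (hred j).2.1
    have hr3 : ∀ j, lexMonic (G j) := fun j => (hred j).2.2
    have hG0 : ∀ j, G j ≠ 0 := by
      intro j e
      have := hr3 j
      rw [e] at this
      simp [lexMonic, Monic] at this
    have hGJ : ∀ j, G j ∈ J := by
      intro j
      refine Ideal.mul_mem_left _ _ ?_
      rw [map_mul]
      refine Ideal.mul_mem_left _ _ ?_
      simp only [gz', map_sum, map_mul, colF]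
      refine Ideal.sum_mem _ fun s _ => ?_
      refine Ideal.mul_mem_left _ _ (Ideal.mul_mem_left _ _ (Ideal.mul_mem_left _ _ ?_))
      exact Ideal.subset_span ⟨_, rfl⟩
    refine ⟨⟨?_, ?_⟩, hr3, ?_, ?_⟩
    · intro q hq
      rw [List.mem_ofFn] at hq
      obtain ⟨j, rfl⟩ := hq
      exact ⟨hG0 j, hGJ j⟩
    · intro q hqJ hq0
      by_contra hcon
      have hnd : ∀ j, ¬ monDvd (lmon (G j)) (lmon q) := fun j e =>
        hcon ⟨G j, (List.mem_ofFn).2 ⟨j, rfl⟩, e⟩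
      obtain ⟨R, hR0, hRJ, hRr⟩ := division' G hr3 J hGJ q hq0 hnd hqJ
      simp only [hr2] at hRr
      -- field facts mod p
      have hyP : ∀ i, (toP p (f i)).natDegree ≤ dy := fun i => natDegree_map_le.trans (hydeg i)
      have hcP : ∀ i a, ((toP p (f i)).coeff a).natDegree ≤ d := fun i a => by
        simp only [toP, coe_mapRingHom, coeff_map]
        exact natDegree_map_le.trans (natDegree_coeff_le (htot i) a)
      have hlP : (toP p (f i0)).coeff dy = C (c : ZMod p) := by simp [toP, hlead]
      have hc0P : (c : ZMod p) ≠ 0 := by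
        rw [Ne, ZMod.intCast_zmod_eq_zero_iff_dvd]; exact hpc
      have hGj1 : G j1 = C ((G j1).coeff 0) := by
        apply eq_C_of_natDegree_eq_zero
        have := congrArg Prod.fst (hr2 j1)
        rw [hj1] at this
        exact this
      obtain ⟨Δp, hΔp0, hΔpW, hWp⟩ := field_main ht (fun i => toP p (f i)) dy d hdy hyP hcP i0
        (c : ZMod p) hc0P hlP ((G j1).coeff 0)
        (by intro e; rw [e, C_0] at hGj1; exact hG0 j1 hGj1) (by rw [← hGj1]; exact hGJ j1)
      rw [← hK] at hΔpW hWp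
      have hzero := echelon_P (colF f dy K) S φ h3 p hpd
      rw [toP_colF] at hzero
      have hMp : M ≤ Δp.natDegree := by
        by_contra hlt
        have : (C Δp : Biv (ZMod p)) = 0 := by
          apply hzero _ hΔpW
          intro s hs
          by_contra hne
          obtain ⟨j, hj⟩ := hSI s hs
          have hle := cf_le _ _ hne
          rw [lmon_C] at hle
          have hm := hmin j
          unfold monDvd at hj
          unfold monLt at hle
          rw [Prod.ext_iff] at hle
          simp only at hle
          omega
        exact hΔp0 (by simpa using this)
      apply hR0
      apply hzero
      · obtain ⟨e1, e2⟩ := deg_of_cf R dy M hdy (by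
          intro m hm
          have a0 := hRr m hm j0
          have a1 := hRr m hm j1
          unfold monDvd at a0 a1 hj0
          simp only at hj0
          omega)
        exact hWp R hRJ e1 fun a => (e2 a).trans hMp
      · intro s hs
        by_contra hne
        obtain ⟨j, hj⟩ := hSI s hs
        exact hRr _ hne j hj
    · intro j l hjl m hm
      change ¬ monDvd (lmon (G l)) m
      rw [hr2]
      exact hg.2.2.1 j l hjl m (hr1 j m hm)
    · intro j l hjl
      change monLt (lmon (G l)) (lmon (G j))
      rw [hr2, hr2]
      exact hg.2.2.2 j l hjl

/-- let `F = (f_1, …, f_t) ⊂ ℤ[x,y]` (`t ≥ 2`) generate a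
zero-dimensional ideal `I ⊆ ℚ[x,y]`, with `y`-degrees at most `d_y`, total degrees at
most `d ≥ 1`, coefficients of absolute value at most `e^h`, and suppose the coefficient
of `y^{d_y}` in some `f_i` is a nonzero integer. Let `G = (g_0, …, g_s)` be the reduced
minimal lexicographic Gröbner basis of `I` (for `x ≺ y`). Then there is a nonzero
integer `β` such that (a) all `β gⱼ` have integer coefficients, (b) `|β|` and all
coefficients of the `β gⱼ` are at most `exp (C(t,d,Δ₁(d_y),h))` in absolute value, and
(c) for every prime `p ∤ β`, the images of the `gⱼ` in `F_p[x,y]` form the reduced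
minimal lexicographic Gröbner basis of `⟨f_1 mod p, …, f_t mod p⟩`. -/
theorem height_bound_case1 {t s : ℕ} (ht : 2 ≤ t)
    (f : Fin t → Biv ℤ) (dy d : ℕ) (hd : 1 ≤ d) (h : ℝ)
    (hydeg : ∀ i, (f i).natDegree ≤ dy)
    (htot : ∀ i, totDeg (f i) ≤ d)
    (hht : ∀ i (a b : ℕ), ((|((f i).coeff a).coeff b| : ℤ) : ℝ) ≤ Real.exp h)
    (hlead : ∃ i, ∃ c : ℤ, c ≠ 0 ∧ (f i).coeff dy = Polynomial.C c)
    (I : Ideal (Biv ℚ)) (hI : I = Ideal.span (Set.range fun i => toQ (f i)))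
    (hdim : FiniteDimensional ℚ (Biv ℚ ⧸ I))
    (g : Fin (s + 1) → Biv ℚ) (hg : IsReducedGB g I) :
    ∃ β : ℤ, β ≠ 0 ∧
      ∃ gz : Fin (s + 1) → Biv ℤ,
        (∀ j, toQ (gz j) = Polynomial.C (Polynomial.C (β : ℚ)) * g j) ∧
        ((|β| : ℝ) ≤ Real.exp (Cfun t d (Delta1 dy) h)) ∧
        (∀ j (a b : ℕ), ((|((gz j).coeff a).coeff b| : ℤ) : ℝ) ≤
          Real.exp (Cfun t d (Delta1 dy) h)) ∧
        (∀ p : ℕ, p.Prime → ¬ ((p : ℤ) ∣ β) →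
          IsReducedGB
            (fun j => Polynomial.C (Polynomial.C ((β : ZMod p))⁻¹) * toP p (gz j))
            (Ideal.span (Set.range fun i => toP p (f i)))) := by
  obtain ⟨i0, c, hc, hlead⟩ := hlead
  have hcH : ((|c| : ℤ) : ℝ) ≤ Real.exp h := by
    have := hht i0 dy 0
    rwa [hlead, coeff_C_zero] at this
  have hc1 : (1 : ℝ) ≤ ((|c| : ℤ) : ℝ) := by exact_mod_cast Int.one_le_abs hc
  have hh : 0 ≤ h := Real.one_le_exp_iff.1 (hc1.trans hcH)
  rcases Nat.eq_zero_or_pos dy with rfl | hdy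
  · have hf0 : f i0 = C (C c) := by
      rw [← hlead]
      exact eq_C_of_natDegree_eq_zero (Nat.le_zero.1 (hydeg i0))
    have hc0 : (c : ℚ) ≠ 0 := by exact_mod_cast hc
    have h1I : (1 : Biv ℚ) ∈ I := by
      have h1 : toQ (f i0) ∈ I := by rw [hI]; exact Ideal.subset_span ⟨i0, rfl⟩
      have h2 := I.mul_mem_left (C (C (c : ℚ)⁻¹)) h1
      have h3 : C (C (c : ℚ)⁻¹) * toQ (f i0) = 1 := by
        have : toQ (f i0) = C (C (c : ℚ)) := by rw [hf0]; simp [toQ]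
        rw [this, ← C_mul, ← C_mul, inv_mul_cancel₀ hc0, C_1, C_1]
      rwa [h3] at h2
    obtain ⟨j0, hj0⟩ := gb_cover hg 1 h1I one_ne_zero
    have hl1 : lmon (1 : Biv ℚ) = (0, 0) := by simp [lmon]
    rw [hl1] at hj0
    have hall : ∀ j, j = j0 := fun j =>
      gb_uniq hg (m := lmon (g j)) ⟨hj0.1.trans (Nat.zero_le _), hj0.2.trans (Nat.zero_le _)⟩
        (cf_lmon_ne _ (gb_mem hg j).1)
    have hg1 : ∀ j, g j = 1 := by
      intro j
      rw [hall j]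
      have e1 : (g j0).natDegree = 0 := Nat.le_zero.1 hj0.1
      have e2 : (g j0).leadingCoeff = 1 :=
        (hg.2.1 j0).natDegree_eq_zero.1 (Nat.le_zero.1 hj0.2)
      rw [eq_C_of_natDegree_eq_zero e1]
      rw [leadingCoeff, e1] at e2
      rw [e2, C_1]
    have hb : ((|c| : ℤ) : ℝ) ≤ Real.exp (Cfun t d (Delta1 0) h) := by
      refine hcH.trans (Real.exp_le_exp.2 ?_)
      have hl2 : 0 ≤ Real.log 2 := Real.log_nonneg (by norm_num)
      simp [Cfun, Bfun, Delta1]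
      linarith
    refine ⟨c, hc, fun _ => C (C c), ?_, ?_, ?_, ?_⟩
    · intro j
      rw [hg1]; simp [toQ]
    · exact_mod_cast hb
    · intro j a b
      refine le_trans ?_ hb
      rw [coeff_C]
      split_ifs
      · rw [coeff_C]
        split_ifs
        · exact le_rfl
        · simp
      · simp
    · intro p hp hpc
      have : Fact p.Prime := ⟨hp⟩
      have hc0P : (c : ZMod p) ≠ 0 := by
        rw [Ne, ZMod.intCast_zmod_eq_zero_iff_dvd]; exact hpc
      have hCC : toP p (C (C c)) = C (C (c : ZMod p)) := by simp [toP]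
      have e : (fun _ : Fin (s + 1) => C (C ((c : ZMod p))⁻¹) * toP p (C (C c))) =
          fun _ => 1 := by
        ext1 _
        rw [hCC, ← C_mul, ← C_mul, inv_mul_cancel₀ hc0P, C_1, C_1]
      rw [e]
      have h1J : (1 : Biv (ZMod p)) ∈ Ideal.span (Set.range fun i => toP p (f i)) := by
        have h1 : toP p (f i0) ∈ Ideal.span (Set.range fun i => toP p (f i)) :=
          Ideal.subset_span ⟨i0, rfl⟩
        have h2 := Ideal.mul_mem_left _ (C (C (c : ZMod p)⁻¹)) h1
        rw [hf0] at h2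
        have h3 := congrFun e j0
        rwa [h3] at h2
      refine ⟨⟨?_, ?_⟩, ?_, ?_, ?_⟩
      · intro q hq
        rw [List.mem_ofFn] at hq
        obtain ⟨j, rfl⟩ := hq
        exact ⟨one_ne_zero, h1J⟩
      · intro q _ _
        refine ⟨1, (List.mem_ofFn).2 ⟨j0, rfl⟩, ?_⟩
        simp [monDvd, lmon]
      · intro j
        simp [lexMonic]
      · intro j l hjl
        exact absurd ((hall j).trans (hall l).symm) hjl
      · intro j l hjl
        exact absurd ((hall j).trans (hall l).symm) hjl.ne
  · exact main_pos ht f dy d hdy h hydeg htot hht i0 c hc hlead hcH hh I hI hdim g hg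
end
end
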